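/- arXiv:2412.05942 — 2 statements merged into one kernel-verified Lean document; each statement's English description precedes it below -/
import Mathlib

section
/- For all integers n, M ≥ 1 and every k ∈ K(M,n), the coefficients satisfy C_{B,M,n}(k) ≤ C_{M,n}(k) ≤ 2^{n(M−1)/2} · C_{B,M,n}(k); equivalently, 1 ≤ C_{M,n}(k)/C_{B,M,n}(k) ≤ (2^{n/2})^{M−1}. In particular C_{M,n}(k) ≥ 1 for every k ∈ K(M,n). -/
open scoped BigOperators

noncomputable section

/-- The permutation matrix `P_σ` with entries `P_σ(i,j) = 1` iff `σ(i) = j`. -/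
def permMat {n : ℕ} (σ : Equiv.Perm (Fin n)) : Matrix (Fin n) (Fin n) ℕ :=
  Matrix.of fun i j => if σ i = j then 1 else 0

/-- `k ∈ K(M,n)`: a nonnegative-integer `n×n` matrix all of whose row sums and
column sums equal `M`. -/
def isDS (M n : ℕ) (k : Matrix (Fin n) (Fin n) ℕ) : Prop :=
  (∀ i, ∑ j, k i j = M) ∧ (∀ j, ∑ i, k i j = M)

/-- `C_{M,n}(k)`: the number of `M`-tuples `(σ_1,…,σ_M)` of permutations of `{1,…,n}`
with `Σ_m P_{σ_m} = k`. -/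
def Ccoef (M n : ℕ) (k : Matrix (Fin n) (Fin n) ℕ) : ℕ :=
  Nat.card {σs : Fin M → Equiv.Perm (Fin n) // (∑ m, permMat (σs m)) = k}

/-- `C_{B,M,n}(k) = (M!)^{2n} · (∏_{i,j} (M−k(i,j))!) / ((M!)^{n²} · ∏_{i,j} k(i,j)!)`. -/
def CB (M n : ℕ) (k : Matrix (Fin n) (Fin n) ℕ) : ℝ :=
  ((M.factorial : ℝ) ^ (2 * n) * ∏ i, ∏ j, ((M - k i j).factorial : ℝ)) /
    ((M.factorial : ℝ) ^ (n ^ 2) * ∏ i, ∏ j, ((k i j).factorial : ℝ))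

namespace BethePermanent

open Finset

/-- The function `x ↦ x log x`. -/
def mulLog (x : ℝ) : ℝ := x * Real.log x

/-- The mixed second difference of `x log x` at `y` with steps `a` and `b`. -/
def mixedDiff (a b y : ℝ) : ℝ :=
  mulLog (y + a + b) + mulLog y - mulLog (y + a) - mulLog (y + b)

@[simp] lemma mulLog_zero : mulLog 0 = 0 := by simp [mulLog]

@[simp] lemma mulLog_one : mulLog 1 = 0 := by simp [mulLog]

lemma continuous_mulLog : Continuous mulLog := Real.continuous_mul_log

lemma hasDerivAt_mulLog {x : ℝ} (hx : x ≠ 0) : HasDerivAt mulLog (Real.log x + 1) x :=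
  Real.hasDerivAt_mul_log hx

lemma mulLog_mul {c : ℝ} (hc : c ≠ 0) (x : ℝ) :
    mulLog (c * x) = c * mulLog x + x * (c * Real.log c) := by
  rcases eq_or_ne x 0 with rfl | hx
  · simp
  · simp only [mulLog, Real.log_mul hc hx]
    ring

lemma mixedDiff_comm (a b y : ℝ) : mixedDiff a b y = mixedDiff b a y := by
  simp only [mixedDiff, add_right_comm y a b]
  ring

@[simp] lemma mixedDiff_zero_left (b y : ℝ) : mixedDiff 0 b y = 0 := by
  simp only [mixedDiff, add_zero]
  ring

lemma mixedDiff_mul {c : ℝ} (hc : c ≠ 0) (a b y : ℝ) :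
    mixedDiff (c * a) (c * b) (c * y) = c * mixedDiff a b y := by
  simp only [mixedDiff, ← mul_add, mulLog_mul hc]
  ring

lemma hasDerivAt_mixedDiff_base {a b y : ℝ} (ha : 0 ≤ a) (hb : 0 ≤ b) (hy : 0 < y) :
    HasDerivAt (mixedDiff a b)
      (Real.log (y + a + b) + Real.log y - Real.log (y + a) - Real.log (y + b)) y := by
  have h1 := (hasDerivAt_mulLog (x := y + a + b) (by positivity)).comp y
    (((hasDerivAt_id y).add_const a).add_const b)
  have h2 := hasDerivAt_mulLog hy.ne'
  have h3 := (hasDerivAt_mulLog (x := y + a) (by positivity)).comp y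
    ((hasDerivAt_id y).add_const a)
  have h4 := (hasDerivAt_mulLog (x := y + b) (by positivity)).comp y
    ((hasDerivAt_id y).add_const b)
  refine (((h1.add h2).sub h3).sub h4).congr_deriv ?_
  ring

lemma continuous_mixedDiff_base (a b : ℝ) : Continuous (mixedDiff a b) := by
  have := continuous_mulLog
  unfold mixedDiff
  fun_prop

lemma antitoneOn_mixedDiff {a b : ℝ} (ha : 0 ≤ a) (hb : 0 ≤ b) :
    AntitoneOn (mixedDiff a b) (Set.Ici 0) := by
  refine antitoneOn_of_deriv_nonpos (convex_Ici 0) (continuous_mixedDiff_base a b).continuousOn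
    ?_ ?_
  · intro y hy
    rw [interior_Ici] at hy
    exact (hasDerivAt_mixedDiff_base ha hb hy).differentiableAt.differentiableWithinAt
  · intro y hy
    rw [interior_Ici] at hy
    have hy' : 0 < y := hy
    rw [(hasDerivAt_mixedDiff_base ha hb hy).deriv, ← Real.log_mul (by positivity) (by positivity)]
    have : Real.log ((y + a + b) * y) ≤ Real.log ((y + a) * (y + b)) :=
      Real.log_le_log (by positivity) (by nlinarith [mul_nonneg ha hb])
    rw [Real.log_mul (x := y + a) (by positivity) (by positivity)] at this
    linarith

lemma hasDerivAt_mixedDiff_step {a b y : ℝ} (ha : 0 < a) (hb : 0 ≤ b) (hy : 0 ≤ y) :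
    HasDerivAt (fun a => mixedDiff a b y) (Real.log (y + a + b) - Real.log (y + a)) a := by
  have h1 := (hasDerivAt_mulLog (x := y + a + b) (by positivity)).comp a
    (((hasDerivAt_id a).const_add y).add_const b)
  have h3 := (hasDerivAt_mulLog (x := y + a) (by positivity)).comp a
    ((hasDerivAt_id a).const_add y)
  refine (((h1.add_const (mulLog y)).sub h3).sub_const (mulLog (y + b))).congr_deriv ?_
  ring

lemma hasDerivAt_log_step {a b y : ℝ} (ha : 0 < a) (hb : 0 ≤ b) (hy : 0 ≤ y) :
    HasDerivAt (fun a => Real.log (y + a + b) - Real.log (y + a))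
      ((y + a + b)⁻¹ - (y + a)⁻¹) a := by
  have h1 := (Real.hasDerivAt_log (x := y + a + b) (by positivity)).comp a
    (((hasDerivAt_id a).const_add y).add_const b)
  have h3 := (Real.hasDerivAt_log (x := y + a) (by positivity)).comp a
    ((hasDerivAt_id a).const_add y)
  refine (h1.sub h3).congr_deriv ?_
  ring

lemma concaveOn_mixedDiff_gap {m b : ℝ} (hm : 1 ≤ m) (hb : 0 ≤ b) (hbm : m * b ≤ 1) :
    ConcaveOn ℝ (Set.Icc 0 m⁻¹) fun a => 2 * mixedDiff a b 0 - (m + 4) * mixedDiff a b 1 := by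
  have hc := continuous_mulLog
  have hder : ∀ a ∈ Set.Ioo 0 m⁻¹, HasDerivAt
      (fun a => 2 * mixedDiff a b 0 - (m + 4) * mixedDiff a b 1)
      (2 * (Real.log (0 + a + b) - Real.log (0 + a)) -
        (m + 4) * (Real.log (1 + a + b) - Real.log (1 + a))) a := fun a ha =>
    ((hasDerivAt_mixedDiff_step ha.1 hb le_rfl).const_mul 2).sub
      ((hasDerivAt_mixedDiff_step ha.1 hb zero_le_one).const_mul (m + 4))
  refine concaveOn_of_hasDerivWithinAt2_nonpos (convex_Icc 0 m⁻¹) ?_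
    (f' := fun a => 2 * (Real.log (0 + a + b) - Real.log (0 + a)) -
        (m + 4) * (Real.log (1 + a + b) - Real.log (1 + a)))
    (f'' := fun a => 2 * ((0 + a + b)⁻¹ - (0 + a)⁻¹) -
        (m + 4) * ((1 + a + b)⁻¹ - (1 + a)⁻¹)) ?_ ?_ ?_
  · refine Continuous.continuousOn ?_
    unfold mixedDiff
    fun_prop
  · intro a ha
    rw [interior_Icc] at ha
    exact (hder a ha).hasDerivWithinAt
  · intro a ha
    rw [interior_Icc] at ha
    exact (((hasDerivAt_log_step ha.1 hb le_rfl).const_mul 2).sub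
      ((hasDerivAt_log_step ha.1 hb zero_le_one).const_mul (m + 4))).hasDerivWithinAt
  · intro a ha
    rw [interior_Icc] at ha
    obtain ⟨ha0, ham⟩ := ha
    have hma : m * a ≤ 1 := by
      have := mul_le_mul_of_nonneg_left ham.le (by linarith : 0 ≤ m)
      rwa [mul_inv_cancel₀ (by linarith)] at this
    have ha1 : a ≤ 1 := by nlinarith
    have hb1 : b ≤ 1 := by nlinarith
    have key : (m + 4) * (a * (a + b)) ≤ 2 * ((1 + a) * (1 + a + b)) := by
      nlinarith [mul_le_mul_of_nonneg_right hma (by linarith : 0 ≤ a + b),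
        mul_le_mul_of_nonneg_left ha1 ha0.le, mul_le_mul_of_nonneg_left ha1 hb,
        mul_le_mul_of_nonneg_left hb1 ha0.le]
    have e : 2 * ((0 + a + b)⁻¹ - (0 + a)⁻¹) - (m + 4) * ((1 + a + b)⁻¹ - (1 + a)⁻¹) =
        b * ((m + 4) * (a * (a + b)) - 2 * ((1 + a) * (1 + a + b))) /
          (a * (a + b) * ((1 + a) * (1 + a + b))) := by
      have : a + b ≠ 0 := by positivity
      have : 1 + a + b ≠ 0 := by positivity
      rw [zero_add]
      field_simp
      ring
    rw [e]
    exact div_nonpos_of_nonpos_of_nonneg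
      (mul_nonpos_of_nonneg_of_nonpos hb (by linarith)) (by positivity)

lemma nonneg_of_concaveOn_of_endpoint {g : ℝ → ℝ} {c x : ℝ} (hg : ConcaveOn ℝ (Set.Icc 0 c) g)
    (h0 : g 0 = 0) (hc : 0 ≤ g c) (hx0 : 0 ≤ x) (hxc : x ≤ c) : 0 ≤ g x := by
  have hc0 : 0 ≤ c := hx0.trans hxc
  have hx : x ∈ segment ℝ 0 c := by
    rw [segment_eq_Icc hc0]
    exact ⟨hx0, hxc⟩
  have := hg.ge_on_segment (x := 0) (y := c) ⟨le_rfl, hc0⟩ ⟨hc0, le_rfl⟩ hx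
  rw [h0, min_eq_left hc] at this
  exact this

/-- The second difference of `x log x` at consecutive integers. -/
lemma mixedDiff_one_one_le (m : ℕ) (hm : 1 ≤ m) :
    ((m : ℝ) + 4) * mixedDiff 1 1 m ≤ 2 * mixedDiff 1 1 0 := by
  have h0 : mixedDiff 1 1 0 = 2 * Real.log 2 := by
    norm_num [mixedDiff, mulLog]
  rw [h0]
  rcases (by omega : m = 1 ∨ m = 2 ∨ 3 ≤ m) with rfl | rfl | h3
  · have : Real.log (3 ^ 15) ≤ Real.log (2 ^ 24) := Real.log_le_log (by norm_num) (by norm_num)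
    rw [Real.log_pow, Real.log_pow] at this
    norm_num [mixedDiff, mulLog] at this ⊢
    linarith
  · have : Real.log (2 ^ 14) ≤ Real.log (3 ^ 9) := Real.log_le_log (by norm_num) (by norm_num)
    rw [Real.log_pow, Real.log_pow] at this
    have h4 : Real.log 4 = 2 * Real.log 2 := by
      rw [show (4 : ℝ) = 2 ^ 2 by norm_num, Real.log_pow]
      norm_num
    norm_num [mixedDiff, mulLog] at this ⊢
    rw [h4]
    linarith
  · have hm3 : (3 : ℝ) ≤ m := by exact_mod_cast h3
    have hm0 : (0 : ℝ) < m := by linarith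
    set x : ℝ := (m : ℝ)
    have e : mixedDiff 1 1 x = (x + 2) * (Real.log (x + 2) - Real.log (x + 1)) -
        x * (Real.log (x + 1) - Real.log x) := by
      simp only [mixedDiff, mulLog, add_assoc x 1 1, one_add_one_eq_two]
      ring
    have u : Real.log (x + 2) - Real.log (x + 1) ≤ (x + 1)⁻¹ := by
      rw [← Real.log_div (by positivity) (by positivity)]
      refine (Real.log_le_sub_one_of_pos (by positivity)).trans (le_of_eq ?_)
      field_simp
      ring
    have l : Real.log (x + 1) - Real.log x ≤ x⁻¹ := by
      rw [← Real.log_div (by positivity) (by positivity)]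
      refine (Real.log_le_sub_one_of_pos (by positivity)).trans (le_of_eq ?_)
      field_simp
      ring
    have d : (Real.log (x + 2) - Real.log (x + 1)) - (Real.log (x + 1) - Real.log x) ≤
        -((x + 1)⁻¹ * (x + 1)⁻¹) := by
      rw [← Real.log_div (by positivity) (by positivity),
        ← Real.log_div (by positivity) (by positivity),
        ← Real.log_div (by positivity) (by positivity)]
      refine (Real.log_le_sub_one_of_pos (by positivity)).trans (le_of_eq ?_)
      field_simp
      ring
    have hd : mixedDiff 1 1 x ≤ x⁻¹ := by
      have hx : (x + 1) * ((x + 1)⁻¹ * (x + 1)⁻¹) = (x + 1)⁻¹ := by field_simp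
      have := mul_le_mul_of_nonneg_left d (by linarith : 0 ≤ x + 1)
      rw [mul_neg, hx] at this
      rw [e]
      linarith
    have hl := Real.log_two_gt_d9
    calc (x + 4) * mixedDiff 1 1 x ≤ (x + 4) * x⁻¹ := by gcongr
      _ ≤ 7 / 3 := by
        rw [← div_eq_mul_inv, div_le_div_iff₀ hm0 (by norm_num)]
        linarith
      _ ≤ 2 * (2 * Real.log 2) := by linarith

lemma mixedDiff_le {m : ℕ} (hm : 1 ≤ m) {a b r : ℝ} (ha : 0 ≤ a) (hb : 0 ≤ b) (hr : 0 ≤ r)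
    (har : m * a ≤ r) (hbr : m * b ≤ r) :
    ((m : ℝ) + 4) * mixedDiff a b r ≤ 2 * mixedDiff a b 0 := by
  have hm1 : (1 : ℝ) ≤ (m : ℝ) := by exact_mod_cast hm
  have hm0 : (0 : ℝ) < m := by linarith
  have unit : ∀ {a b : ℝ}, 0 ≤ a → 0 ≤ b → a ≤ (m : ℝ)⁻¹ → b ≤ (m : ℝ)⁻¹ →
      0 ≤ 2 * mixedDiff a b 0 - ((m : ℝ) + 4) * mixedDiff a b 1 := by
    have hinv : (m : ℝ) * (m : ℝ)⁻¹ = 1 := mul_inv_cancel₀ hm0.ne'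
    have step : ∀ {a b : ℝ}, 0 ≤ a → 0 ≤ b → a ≤ (m : ℝ)⁻¹ → b ≤ (m : ℝ)⁻¹ →
        0 ≤ 2 * mixedDiff (m : ℝ)⁻¹ b 0 - ((m : ℝ) + 4) * mixedDiff (m : ℝ)⁻¹ b 1 →
        0 ≤ 2 * mixedDiff a b 0 - ((m : ℝ) + 4) * mixedDiff a b 1 := by
      intro a b ha hb ham hbm h
      have hbm' : (m : ℝ) * b ≤ 1 := by
        rw [← hinv]
        gcongr
      have hc := concaveOn_mixedDiff_gap hm1 hb hbm'
      have h0 : 2 * mixedDiff 0 b 0 - ((m : ℝ) + 4) * mixedDiff 0 b 1 = 0 := by simp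
      have hnn := fun h1 h2 => nonneg_of_concaveOn_of_endpoint hc h1 h2 ha ham
      exact hnn h0 h
    intro a b ha hb ham hbm
    refine step ha hb ham hbm ?_
    rw [mixedDiff_comm _ b, mixedDiff_comm _ b]
    refine step hb (by positivity) hbm le_rfl ?_
    have h := mixedDiff_one_one_le m hm
    have e0 := mixedDiff_mul (inv_ne_zero hm0.ne') 1 1 0
    have e1 := mixedDiff_mul (inv_ne_zero hm0.ne') 1 1 (m : ℝ)
    rw [inv_mul_cancel₀ hm0.ne'] at e1
    rw [mul_zero] at e0
    rw [mul_one] at e0 e1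
    rw [e0, e1]
    have := mul_le_mul_of_nonneg_left h (inv_nonneg.2 hm0.le)
    linarith
  rcases hr.eq_or_lt with rfl | hr
  · have : a = 0 := le_antisymm (nonpos_of_mul_nonpos_right har hm0) ha
    simp [this]
  · have h := unit (a := r⁻¹ * a) (b := r⁻¹ * b) (by positivity) (by positivity)
      (by rw [inv_mul_le_iff₀ hr, ← div_eq_mul_inv, le_div_iff₀ hm0]; linarith)
      (by rw [inv_mul_le_iff₀ hr, ← div_eq_mul_inv, le_div_iff₀ hm0]; linarith)
    have e0 := mixedDiff_mul (inv_ne_zero hr.ne') a b 0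
    have e1 := mixedDiff_mul (inv_ne_zero hr.ne') a b r
    rw [inv_mul_cancel₀ hr.ne'] at e1
    rw [mul_zero] at e0
    rw [e0, e1] at h
    have : 0 ≤ r⁻¹ * (2 * mixedDiff a b 0 - (m + 4) * mixedDiff a b r) := by linarith
    have := nonneg_of_mul_nonneg_right this (inv_pos.2 hr)
    linarith

section

/-- In a uniformly random ordering of `n` elements, the probability that a given element together
with a given set of `s - 1` others are exactly the elements not preceding it. -/
def orderWeight (n s : ℕ) : ℝ := ((s - 1).factorial * (n - s).factorial : ℝ) / n.factorial

lemma orderWeight_nonneg (n s : ℕ) : 0 ≤ orderWeight n s := by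
  unfold orderWeight
  positivity

lemma orderWeight_succ {n s : ℕ} (hs : 1 ≤ s) (hsn : s ≤ n) :
    orderWeight (n + 1) s = ((n + 1 - s : ℕ) : ℝ) / (n + 1) * orderWeight n s := by
  obtain ⟨d, rfl⟩ := Nat.exists_eq_add_of_le hsn
  have e : s + d + 1 - s = d + 1 := by omega
  simp only [orderWeight, e, Nat.add_sub_cancel_left, Nat.factorial_succ]
  have : ((s + d).factorial : ℝ) ≠ 0 := by positivity
  push_cast
  field_simp

lemma orderWeight_succ_succ {n s : ℕ} (hs : 1 ≤ s) (hsn : s ≤ n) :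
    orderWeight (n + 1) (s + 1) = (s : ℝ) / (n + 1) * orderWeight n s := by
  obtain ⟨t, rfl⟩ := Nat.exists_eq_add_of_le' hs
  have e : n + 1 - (t + 1 + 1) = n - (t + 1) := by omega
  simp only [orderWeight, e, Nat.add_sub_cancel, Nat.factorial_succ]
  have : (n.factorial : ℝ) ≠ 0 := by positivity
  push_cast
  field_simp

lemma orderWeight_self {n : ℕ} (hn : 1 ≤ n) : orderWeight n n = (n : ℝ)⁻¹ := by
  obtain ⟨t, rfl⟩ := Nat.exists_eq_add_of_le' hn
  have : (t.factorial : ℝ) ≠ 0 := by positivity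
  simp only [orderWeight, Nat.add_sub_cancel, Nat.sub_self, Nat.factorial_succ]
  push_cast
  field_simp
  simp

lemma orderWeight_one (n : ℕ) : orderWeight (n + 1) 1 = ((n : ℝ) + 1)⁻¹ := by
  have : (n.factorial : ℝ) ≠ 0 := by positivity
  simp only [orderWeight, Nat.add_sub_cancel, Nat.sub_self, Nat.factorial_succ]
  push_cast
  field_simp
  simp

lemma orderWeight_add {n s : ℕ} (hs : 1 ≤ s) (hsn : s ≤ n) :
    orderWeight (n + 1) s + orderWeight (n + 1) (s + 1) = orderWeight n s := by
  rw [orderWeight_succ hs hsn, orderWeight_succ_succ hs hsn, Nat.cast_sub (by omega)]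
  push_cast
  field_simp
  ring

lemma sum_powerset_orderWeight {ι : Type*} (s : Finset ι) :
    ∑ S ∈ s.powerset, orderWeight (#s + 2) (#S + 1) = 1 / 2 := by
  rw [Finset.sum_powerset_apply_card (fun t => orderWeight (#s + 2) (t + 1))]
  set m := #s
  have h : ∀ t ∈ range (m + 1), m.choose t • orderWeight (m + 2) (t + 1) =
      ((m + 1 - t : ℕ) : ℝ) / ((m + 1) * (m + 2)) := by
    intro t ht
    have htm : t ≤ m := by simpa [Nat.lt_succ_iff] using ht
    obtain ⟨d, hd⟩ := Nat.exists_eq_add_of_le htm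
    have e1 : m + 2 - (t + 1) = d + 1 := by omega
    have e2 : m + 1 - t = d + 1 := by omega
    have hc : (m.choose t : ℝ) * (t.factorial * d.factorial) = m.factorial := by
      have := Nat.choose_mul_factorial_mul_factorial htm
      rw [show m - t = d by omega, mul_assoc] at this
      exact_mod_cast this
    have hm0 : (m.factorial : ℝ) ≠ 0 := by positivity
    simp only [orderWeight, e1, e2, Nat.add_sub_cancel, Nat.factorial_succ, nsmul_eq_mul]
    push_cast
    rw [← mul_div_assoc, div_eq_div_iff (by positivity) (by positivity), ← hc]
    ring
  rw [sum_congr rfl h, ← sum_div, ← Nat.cast_sum]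
  have hs : (∑ t ∈ range (m + 1), (m + 1 - t)) * 2 = (m + 2) * (m + 1) := by
    have h1 := Finset.sum_range_id_mul_two (m + 2)
    rw [← Finset.sum_range_reflect, sum_range_succ] at h1
    simpa using h1
  have hs' : ((∑ t ∈ range (m + 1), (m + 1 - t) : ℕ) : ℝ) * 2 = (m + 2) * (m + 1) := by
    exact_mod_cast hs
  rw [div_eq_div_iff (by positivity) (by norm_num), hs']
  ring

variable {ι : Type*} [DecidableEq ι]

/-- The average of `∑ j, p j * log (∑ p over the elements not preceding j)` over all orderings
of `s`. -/
def orderSum (s : Finset ι) (p : ι → ℝ) : ℝ :=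
  ∑ S ∈ s.powerset, orderWeight #s #S * mulLog (∑ i ∈ S, p i)

lemma orderSum_merge {s : Finset ι} {a b : ι} (ha : a ∉ s) (hb : b ∉ s) (hab : a ≠ b)
    {p q : ι → ℝ} (hq : ∀ i ∈ s, q i = p i) (hqb : q b = p a + p b) :
    orderSum (insert b s) q = orderSum (insert a (insert b s)) p +
      ∑ S ∈ s.powerset, orderWeight (#s + 2) (#S + 1) * mixedDiff (p a) (p b) (∑ i ∈ S, p i) := by
  have ha' : a ∉ insert b s := by simp [ha, hab]
  simp only [orderSum, sum_powerset_insert hb, sum_powerset_insert ha', card_insert_of_notMem hb,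
    card_insert_of_notMem ha', ← sum_add_distrib]
  refine sum_congr rfl fun S hS => ?_
  have hSs := mem_powerset.1 hS
  have hbS : b ∉ S := fun h => hb (hSs h)
  have haS : a ∉ S := fun h => ha (hSs h)
  have haS' : a ∉ insert b S := by simp [haS, hab]
  have hcard := card_le_card hSs
  rw [sum_insert hbS, sum_insert haS, sum_insert hbS, sum_insert haS', sum_insert hbS, hqb,
    sum_congr rfl fun i hi => hq i (hSs hi), card_insert_of_notMem hbS, card_insert_of_notMem haS,
    card_insert_of_notMem haS', card_insert_of_notMem hbS]
  have h1 : orderWeight (#s + 1) #S * mulLog (∑ i ∈ S, p i) =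
      (orderWeight (#s + 1 + 1) #S + orderWeight (#s + 1 + 1) (#S + 1)) *
        mulLog (∑ i ∈ S, p i) := by
    rcases S.eq_empty_or_nonempty with rfl | hne
    · simp
    · rw [orderWeight_add (card_pos.2 hne) (by omega)]
  rw [h1, ← orderWeight_add (n := #s + 1) (s := #S + 1) (by omega) (by omega)]
  simp only [mixedDiff]
  rw [show p a + p b + ∑ i ∈ S, p i = ∑ i ∈ S, p i + p a + p b by ring,
    show p a + (p b + ∑ i ∈ S, p i) = ∑ i ∈ S, p i + p a + p b by ring,
    show p a + ∑ i ∈ S, p i = ∑ i ∈ S, p i + p a by ring,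
    show p b + ∑ i ∈ S, p i = ∑ i ∈ S, p i + p b by ring]
  ring

lemma mixedDiff_le_sum {s : Finset ι} (hs : s.Nonempty) {p : ι → ℝ} {a b : ℝ} (ha : 0 ≤ a)
    (hb : 0 ≤ b) (hp : ∀ i ∈ s, 0 ≤ p i) (hpa : ∀ i ∈ s, a ≤ p i) (hpb : ∀ i ∈ s, b ≤ p i) :
    mixedDiff a b (∑ i ∈ s, p i) ≤
      ∑ S ∈ s.powerset, orderWeight (#s + 2) (#S + 1) * mixedDiff a b (∑ i ∈ S, p i) := by
  set r := ∑ i ∈ s, p i with hr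
  have hr0 : 0 ≤ r := sum_nonneg hp
  have hgap := mixedDiff_le (m := #s) (card_pos.2 hs) ha hb hr0
    (by simpa using card_nsmul_le_sum s p a hpa) (by simpa using card_nsmul_le_sum s p b hpb)
  have hmem : ∅ ∈ s.powerset := empty_mem_powerset s
  have htot := sum_powerset_orderWeight s
  rw [← add_sum_erase _ _ hmem, card_empty, orderWeight_one (#s + 1)] at htot
  rw [← add_sum_erase _ _ hmem, card_empty, orderWeight_one (#s + 1), sum_empty]
  have hle : (∑ S ∈ s.powerset.erase ∅, orderWeight (#s + 2) (#S + 1)) * mixedDiff a b r ≤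
      ∑ S ∈ s.powerset.erase ∅, orderWeight (#s + 2) (#S + 1) * mixedDiff a b (∑ i ∈ S, p i) := by
    rw [sum_mul]
    refine sum_le_sum fun S hS => mul_le_mul_of_nonneg_left ?_ (orderWeight_nonneg _ _)
    have hSs := mem_powerset.1 (mem_of_mem_erase hS)
    exact antitoneOn_mixedDiff ha hb (sum_nonneg fun i hi => hp i (hSs hi)) hr0
      (sum_le_sum_of_subset_of_nonneg hSs fun i hi _ => hp i hi)
  refine le_trans ?_ (add_le_add_right hle _)
  have hsum : ∑ S ∈ s.powerset.erase ∅, orderWeight (#s + 2) (#S + 1) =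
      1 / 2 - (((#s + 1 : ℕ) : ℝ) + 1)⁻¹ := by linarith
  rw [hsum]
  push_cast
  have hpos : (0 : ℝ) < #s + 1 + 1 := by positivity
  have hinv : ((#s : ℝ) + 1 + 1) * ((#s : ℝ) + 1 + 1)⁻¹ = 1 := mul_inv_cancel₀ hpos.ne'
  set c := ((#s : ℝ) + 1 + 1)⁻¹
  have hc : 0 ≤ c := inv_nonneg.2 hpos.le
  have := mul_le_mul_of_nonneg_left hgap hc
  have e : c * (((#s : ℝ) + 4) * mixedDiff a b r) =
      (((#s : ℝ) + 1 + 1) * c) * mixedDiff a b r + 2 * c * mixedDiff a b r := by ring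
  rw [e, hinv] at this
  linarith

lemma exists_two_least {s : Finset ι} (hs : 2 ≤ #s) (p : ι → ℝ) :
    ∃ a b : ι, ∃ t : Finset ι, a ∉ t ∧ b ∉ t ∧ a ≠ b ∧ s = insert a (insert b t) ∧
      (∀ i ∈ t, p a ≤ p i) ∧ ∀ i ∈ t, p b ≤ p i := by
  obtain ⟨a, ha, hamin⟩ := s.exists_min_image p (card_pos.1 (by omega))
  have hcard := card_erase_of_mem ha
  obtain ⟨b, hb, hbmin⟩ := (s.erase a).exists_min_image p (card_pos.1 (by omega))
  refine ⟨a, b, (s.erase a).erase b, by simp, by simp, (ne_of_mem_erase hb).symm, ?_, ?_, ?_⟩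
  · rw [insert_erase hb, insert_erase ha]
  · exact fun i hi => hamin i (mem_of_mem_erase (mem_of_mem_erase hi))
  · exact fun i hi => hbmin i (mem_of_mem_erase hi)

lemma orderSum_pair_le {x y : ℝ} (h : x + y = 1) :
    (mulLog x + mulLog y) / 2 ≤ mulLog y + mulLog x + Real.log 2 / 2 := by
  have := Real.binEntropy_le_log_two (p := x)
  rw [Real.binEntropy_eq_negMulLog_add_negMulLog_one_sub, show 1 - x = y by linarith] at this
  simp only [Real.negMulLog, mulLog] at this ⊢
  linarith

/-- For a probability vector `p`, the averaged logarithm of remaining mass exceeds the Bethe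
entropy correction by at most `log √2`. -/
lemma orderSum_le (s : Finset ι) (p : ι → ℝ) (hp : ∀ i ∈ s, 0 ≤ p i) (hs : ∑ i ∈ s, p i = 1) :
    orderSum s p ≤ ∑ i ∈ s, mulLog (1 - p i) + Real.log 2 / 2 := by
  induction hn : #s generalizing s p with
  | zero =>
    rw [card_eq_zero.1 hn] at hs
    simp at hs
  | succ n ih =>
    rcases Nat.eq_zero_or_pos n with rfl | hn0
    · obtain ⟨a, rfl⟩ := card_eq_one.1 hn
      rw [sum_singleton] at hs
      have h2 := Real.log_nonneg one_le_two
      have hps : ({a} : Finset ι).powerset = {∅, {a}} := rfl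
      simp [orderSum, hps, hs]
      positivity
    · obtain ⟨a, b, t, ha, hb, hab, rfl, hpa, hpb⟩ := exists_two_least (s := s) (by omega) p
      have ha' : a ∉ insert b t := by simp [ha, hab]
      rw [sum_insert ha', sum_insert hb] at hs
      have hpa0 := hp a (by simp)
      have hpb0 := hp b (by simp)
      have hpt : ∀ i ∈ t, 0 ≤ p i := fun i hi => hp i (by simp [hi])
      rw [sum_insert ha', sum_insert hb]
      rcases t.eq_empty_or_nonempty with rfl | ht
      · have e : orderSum (insert a (insert b ∅)) p = (mulLog (p a) + mulLog (p b)) / 2 := by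
          rw [sum_empty, add_zero] at hs
          simp only [orderSum, sum_powerset_insert ha', sum_powerset_insert hb, powerset_empty,
            sum_singleton, card_insert_of_notMem ha', card_insert_of_notMem hb, sum_insert hb,
            sum_insert ha', sum_insert ha]
          simp [hs, orderWeight]
          ring
        rw [sum_empty, add_zero] at hs
        rw [e, show 1 - p a = p b by linarith, show 1 - p b = p a by linarith]
        simpa using orderSum_pair_le hs
      · set q : ι → ℝ := Function.update p b (p a + p b) with hqdef
        have hqb : q b = p a + p b := by simp [hqdef]
        have hqt : ∀ i ∈ t, q i = p i := fun i hi => by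
          have : i ≠ b := fun h => hb (h ▸ hi)
          simp [hqdef, this]
        have hcard : #(insert b t) = n := by
          rw [card_insert_of_notMem ha'] at hn
          omega
        have hih := ih (insert b t) q
          (by
            intro i hi
            rcases mem_insert.1 hi with rfl | hi
            · rw [hqb]
              positivity
            · rw [hqt i hi]
              exact hpt i hi)
          (by rw [sum_insert hb, hqb, sum_congr rfl hqt]; linarith) hcard
        have hq' : ∑ i ∈ t, mulLog (1 - q i) = ∑ i ∈ t, mulLog (1 - p i) :=
          sum_congr rfl fun i hi => by rw [hqt i hi]
        rw [orderSum_merge ha hb hab hqt hqb, sum_insert hb, hqb, hq'] at hih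
        have hm := mixedDiff_le_sum ht hpa0 hpb0 hpt hpa hpb
        set r := ∑ i ∈ t, p i
        rw [show 1 - p a = r + p b by linarith, show 1 - p b = r + p a by linarith]
        rw [show 1 - (p a + p b) = r by linarith] at hih
        simp only [mixedDiff, show r + p a + p b = 1 by linarith, mulLog_one] at hm hih
        linarith

end

section

variable {ι : Type*} [DecidableEq ι]

/-- The average, over all orderings of `s`, of the logarithm of the total weight of the elements
not preceding `j`. -/
def meanLogRemaining (s : Finset ι) (w : ι → ℝ) (j : ι) : ℝ :=
  ∑ S ∈ s.powerset with j ∈ S, orderWeight #s #S * Real.log (∑ i ∈ S, w i)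

lemma meanLogRemaining_succ {s : Finset ι} {m : ℕ} (hs : #s = m + 1) {j : ι} (hj : j ∈ s)
    (w : ι → ℝ) :
    meanLogRemaining s w j = ((m : ℝ) + 1)⁻¹ *
      (Real.log (∑ i ∈ s, w i) + ∑ l ∈ s.erase j, meanLogRemaining (s.erase l) w j) := by
  have hcard : ∀ l ∈ s.erase j, #(s.erase l) = m := fun l hl => by
    rw [card_erase_of_mem (mem_of_mem_erase hl), hs, Nat.add_sub_cancel]
  have hswap : ∑ l ∈ s.erase j, meanLogRemaining (s.erase l) w j =
      ∑ S ∈ s.powerset with j ∈ S,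
        ((m + 1 - #S : ℕ) : ℝ) * (orderWeight m #S * Real.log (∑ i ∈ S, w i)) := by
    have h1 : ∑ l ∈ s.erase j, meanLogRemaining (s.erase l) w j =
        ∑ l ∈ s.erase j, ∑ S ∈ (s.erase l).powerset with j ∈ S,
          orderWeight m #S * Real.log (∑ i ∈ S, w i) :=
      sum_congr rfl fun l hl => by rw [meanLogRemaining, hcard l hl]
    rw [h1, sum_comm' (t' := s.powerset.filter (j ∈ ·)) (s' := fun S => s \ S)]
    · refine sum_congr rfl fun S hS => ?_
      rw [sum_const, card_sdiff_of_subset (mem_powerset.1 (mem_filter.1 hS).1), hs, nsmul_eq_mul]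
    · intro l S
      simp only [mem_erase, mem_filter, mem_powerset, mem_sdiff]
      constructor
      · rintro ⟨⟨_, hl⟩, hS, hjS⟩
        exact ⟨⟨hl, fun h => (mem_erase.1 (hS h)).1 rfl⟩, hS.trans (erase_subset _ _), hjS⟩
      · rintro ⟨⟨hl, hlS⟩, hS, hjS⟩
        exact ⟨⟨fun h => hlS (h ▸ hjS), hl⟩,
          fun i hi => mem_erase.2 ⟨fun h => hlS (h ▸ hi), hS hi⟩, hjS⟩
  have hmem : s ∈ s.powerset.filter (j ∈ ·) := by simp [hj]
  rw [hswap, meanLogRemaining, ← add_sum_erase _ _ hmem, ← add_sum_erase _ _ hmem, hs,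
    Nat.sub_self, Nat.cast_zero, zero_mul, zero_add, mul_add, mul_sum,
    orderWeight_self (by omega)]
  push_cast
  congr 1
  refine sum_congr rfl fun S hS => ?_
  obtain ⟨hne, hS⟩ := mem_erase.1 hS
  obtain ⟨hS, hjS⟩ := mem_filter.1 hS
  have hlt := card_lt_card ((mem_powerset.1 hS).ssubset_of_ne hne)
  rw [orderWeight_succ (card_pos.2 ⟨j, hjS⟩) (by omega)]
  ring

lemma sum_mul_meanLogRemaining (s : Finset ι) (p : ι → ℝ) :
    ∑ j ∈ s, p j * meanLogRemaining s p j = orderSum s p := by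
  simp only [meanLogRemaining, orderSum, mul_sum]
  rw [sum_comm' (t' := s.powerset) (s' := fun S => S)]
  · refine sum_congr rfl fun S _ => ?_
    rw [← sum_mul, mulLog]
    ring
  · intro j S
    simp only [mem_filter, mem_powerset]
    exact ⟨fun h => ⟨h.2.2, h.2.1⟩, fun h => ⟨h.2 h.1, h.2, h.1⟩⟩

lemma image_eq_of_eqOn_compl {σ τ : Equiv.Perm ι} {R : Finset ι} (h : ∀ i, i ∉ R → σ i = τ i) :
    R.image σ = R.image τ := by
  have key : ∀ {σ τ : Equiv.Perm ι}, (∀ i, i ∉ R → σ i = τ i) → R.image τ ⊆ R.image σ := by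
    intro σ τ h j hj
    obtain ⟨i, hi, rfl⟩ := mem_image.1 hj
    by_cases h' : σ.symm (τ i) ∈ R
    · exact mem_image.2 ⟨_, h', by simp⟩
    · have := h _ h'
      rw [Equiv.apply_symm_apply] at this
      exact absurd (τ.injective this ▸ hi) h'
  exact (key fun i hi => (h i hi).symm).antisymm (key h)

lemma mul_exp_neg_log_le_one {x : ℝ} (hx : 0 ≤ x) : x * Real.exp (-Real.log x) ≤ 1 := by
  rcases hx.eq_or_lt with rfl | hx
  · simp
  · rw [Real.exp_neg, Real.exp_log hx, mul_inv_cancel₀ hx.ne']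

lemma prod_mul_exp_meanLogRemaining_le {w : ι → ι → ℝ} (hw : ∀ i j, 0 ≤ w i j) {R : Finset ι}
    {m : ℕ} (hR : #R = m + 1) (σ : Equiv.Perm ι) :
    ∏ i ∈ R, w i (σ i) * Real.exp (-meanLogRemaining (R.image σ) (w i) (σ i)) ≤
      ∑ i₀ ∈ R, ((m : ℝ) + 1)⁻¹ *
        (w i₀ (σ i₀) * Real.exp (-Real.log (∑ j ∈ R.image σ, w i₀ j)) *
          ∏ i ∈ R.erase i₀, w i (σ i) *
            Real.exp (-meanLogRemaining ((R.image σ).erase (σ i₀)) (w i) (σ i))) := by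
  have hcard : #(R.image σ) = m + 1 := by rw [card_image_of_injective _ σ.injective, hR]
  set C := R.image σ with hC
  have hsum : ∑ i ∈ R, -meanLogRemaining C (w i) (σ i) = ∑ i₀ ∈ R, ((m : ℝ) + 1)⁻¹ •
      (-Real.log (∑ j ∈ C, w i₀ j) +
        ∑ i ∈ R.erase i₀, -meanLogRemaining (C.erase (σ i₀)) (w i) (σ i)) := by
    have h1 : ∀ i ∈ R, -meanLogRemaining C (w i) (σ i) = ((m : ℝ) + 1)⁻¹ *
        (-Real.log (∑ j ∈ C, w i j) +
          ∑ i₀ ∈ R.erase i, -meanLogRemaining (C.erase (σ i₀)) (w i) (σ i)) := by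
      intro i hi
      have e : ∑ l ∈ C.erase (σ i), meanLogRemaining (C.erase l) (w i) (σ i) =
          ∑ i₀ ∈ R.erase i, meanLogRemaining (C.erase (σ i₀)) (w i) (σ i) := by
        rw [hC, ← image_erase σ.injective, sum_image σ.injective.injOn]
      rw [meanLogRemaining_succ hcard (mem_image_of_mem σ hi), e, sum_neg_distrib]
      ring
    rw [sum_congr rfl h1, ← mul_sum, sum_add_distrib]
    simp only [smul_eq_mul]
    rw [← mul_sum, sum_add_distrib]
    congr 2
    refine sum_comm' fun i i₀ => ?_
    simp only [mem_erase]
    tauto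
  have hconv := convexOn_exp.map_sum_le (t := R) (w := fun _ => ((m : ℝ) + 1)⁻¹)
    (p := fun i₀ => -Real.log (∑ j ∈ C, w i₀ j) +
        ∑ i ∈ R.erase i₀, -meanLogRemaining (C.erase (σ i₀)) (w i) (σ i))
    (fun _ _ => by positivity)
    (by
      rw [sum_const, hR, nsmul_eq_mul]
      push_cast
      exact mul_inv_cancel₀ (by positivity))
    (fun _ _ => Set.mem_univ _)
  rw [← hsum] at hconv
  rw [prod_mul_distrib, ← Real.exp_sum]
  refine (mul_le_mul_of_nonneg_left hconv (prod_nonneg fun i _ => hw i _)).trans (le_of_eq ?_)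
  rw [mul_sum]
  refine sum_congr rfl fun i₀ hi₀ => ?_
  rw [prod_mul_distrib, ← Real.exp_sum, ← mul_prod_erase _ _ hi₀, Real.exp_add, smul_eq_mul]
  ring

/-- Averaging the sequential-sampling distribution geometrically over all row orders gives a
sub-probability distribution on permutations. -/
lemma sum_prod_mul_exp_meanLogRemaining_le_one_of_eqOn_compl [Fintype ι] {w : ι → ι → ℝ}
    (hw : ∀ i j, 0 ≤ w i j) (R : Finset ι) (τ : Equiv.Perm ι) :
    ∑ σ : Equiv.Perm ι with ∀ i, i ∉ R → σ i = τ i,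
      ∏ i ∈ R, w i (σ i) * Real.exp (-meanLogRemaining (R.image τ) (w i) (σ i)) ≤ 1 := by
  induction hm : #R generalizing R τ with
  | zero =>
    rw [card_eq_zero.1 hm]
    have : (univ.filter fun σ : Equiv.Perm ι => ∀ i, i ∉ (∅ : Finset ι) → σ i = τ i) = {τ} := by
      ext σ
      simp [Equiv.ext_iff]
    rw [this]
    simp
  | succ m ih =>
    set F := univ.filter fun σ : Equiv.Perm ι => ∀ i, i ∉ R → σ i = τ i with hF
    have himg : ∀ σ ∈ F, R.image σ = R.image τ := fun σ hσ =>
      image_eq_of_eqOn_compl (mem_filter.1 hσ).2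
    set C := R.image τ with hC
    have hstep : ∀ σ ∈ F,
        ∏ i ∈ R, w i (σ i) * Real.exp (-meanLogRemaining C (w i) (σ i)) ≤
          ∑ i₀ ∈ R, ((m : ℝ) + 1)⁻¹ *
            (w i₀ (σ i₀) * Real.exp (-Real.log (∑ j ∈ C, w i₀ j)) *
              ∏ i ∈ R.erase i₀, w i (σ i) *
                Real.exp (-meanLogRemaining (C.erase (σ i₀)) (w i) (σ i))) := by
      intro σ hσ
      rw [← himg σ hσ]
      exact prod_mul_exp_meanLogRemaining_le hw hm σ
    have hrow : ∀ i₀ ∈ R, ∑ σ ∈ F, w i₀ (σ i₀) * Real.exp (-Real.log (∑ j ∈ C, w i₀ j)) *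
        ∏ i ∈ R.erase i₀, w i (σ i) *
          Real.exp (-meanLogRemaining (C.erase (σ i₀)) (w i) (σ i)) ≤ 1 := by
      intro i₀ hi₀
      have hmaps : ∀ σ ∈ F, σ i₀ ∈ C := fun σ hσ => by
        rw [← himg σ hσ]
        exact mem_image_of_mem σ hi₀
      rw [← sum_fiberwise_of_maps_to hmaps]
      have hfib : ∀ j₀ ∈ C, ∑ σ ∈ F with σ i₀ = j₀,
          w i₀ (σ i₀) * Real.exp (-Real.log (∑ j ∈ C, w i₀ j)) *
            ∏ i ∈ R.erase i₀, w i (σ i) *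
              Real.exp (-meanLogRemaining (C.erase (σ i₀)) (w i) (σ i)) ≤
          w i₀ j₀ * Real.exp (-Real.log (∑ j ∈ C, w i₀ j)) := by
        intro j₀ _
        have hnn : 0 ≤ w i₀ j₀ * Real.exp (-Real.log (∑ j ∈ C, w i₀ j)) :=
          mul_nonneg (hw _ _) (Real.exp_nonneg _)
        rcases (F.filter fun σ => σ i₀ = j₀).eq_empty_or_nonempty with he | ⟨τ', hτ'⟩
        · rw [he, sum_empty]
          exact hnn
        · obtain ⟨hτF, hτj⟩ := mem_filter.1 hτ'
          have hset : (F.filter fun σ => σ i₀ = j₀) =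
              univ.filter fun σ : Equiv.Perm ι => ∀ i, i ∉ R.erase i₀ → σ i = τ' i := by
            ext σ
            have hτR := (mem_filter.1 hτF).2
            simp only [hF, mem_filter, mem_univ, true_and, mem_erase, not_and]
            constructor
            · rintro ⟨hσ, hσj⟩ i hi
              by_cases h : i = i₀
              · rw [h, hσj, hτj]
              · rw [hσ i (hi h), hτR i (hi h)]
            · intro hσ
              refine ⟨fun i hi => ?_, ?_⟩
              · rw [hσ i fun _ => hi, hτR i hi]
              · rw [hσ i₀ fun h => absurd rfl h, hτj]
          have hC' : (R.erase i₀).image τ' = C.erase j₀ := by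
            rw [image_erase τ'.injective, himg τ' hτF, hτj]
          have hcard : #(R.erase i₀) = m := by
            rw [card_erase_of_mem hi₀, hm, Nat.add_sub_cancel]
          have hih := ih (R.erase i₀) τ' hcard
          rw [← hset, hC'] at hih
          refine le_trans (le_of_eq ?_) (mul_le_of_le_one_right hnn hih)
          rw [mul_sum]
          refine sum_congr rfl fun σ hσ => ?_
          rw [(mem_filter.1 hσ).2]
      refine (sum_le_sum hfib).trans ?_
      rw [← sum_mul]
      exact mul_exp_neg_log_le_one (sum_nonneg fun j _ => hw _ _)
    refine (sum_le_sum hstep).trans ?_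
    rw [sum_comm]
    calc ∑ i₀ ∈ R, ∑ σ ∈ F, ((m : ℝ) + 1)⁻¹ *
            (w i₀ (σ i₀) * Real.exp (-Real.log (∑ j ∈ C, w i₀ j)) *
              ∏ i ∈ R.erase i₀, w i (σ i) *
                Real.exp (-meanLogRemaining (C.erase (σ i₀)) (w i) (σ i)))
        ≤ ∑ _i₀ ∈ R, ((m : ℝ) + 1)⁻¹ * 1 := by
          refine sum_le_sum fun i₀ hi₀ => ?_
          rw [← mul_sum]
          exact mul_le_mul_of_nonneg_left (hrow i₀ hi₀) (by positivity)
      _ = 1 := by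
          rw [sum_const, hm, nsmul_eq_mul, mul_one]
          push_cast
          exact mul_inv_cancel₀ (by positivity)

lemma sum_prod_mul_exp_meanLogRemaining_le_one [Fintype ι] {w : ι → ι → ℝ}
    (hw : ∀ i j, 0 ≤ w i j) :
    ∑ σ : Equiv.Perm ι,
      ∏ i, w i (σ i) * Real.exp (-meanLogRemaining univ (w i) (σ i)) ≤ 1 := by
  have h := sum_prod_mul_exp_meanLogRemaining_le_one_of_eqOn_compl hw univ (1 : Equiv.Perm ι)
  simpa using h

end

section

variable {ι κ : Type*} [DecidableEq κ]

/-- The monomer-dimer partition function of the complete bipartite graph with rows `R` and columns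
`C`, with dimer weights `w`, row monomer weights `Y` and column monomer weights `Z`. -/
def matchingSum (w : ι → κ → ℝ) (Y : ι → ℝ) (Z : κ → ℝ) : List ι → Finset κ → ℝ
  | [], C => ∏ j ∈ C, Z j
  | i :: R, C => Y i * matchingSum w Y Z R C + ∑ j ∈ C, w i j * matchingSum w Y Z R (C.erase j)

section

variable {w w' : ι → κ → ℝ} {Y Y' : ι → ℝ} {Z Z' : κ → ℝ}

lemma matchingSum_nonneg (hw : ∀ i j, 0 ≤ w i j) (hY : ∀ i, 0 ≤ Y i) (hZ : ∀ j, 0 ≤ Z j)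
    (R : List ι) (C : Finset κ) : 0 ≤ matchingSum w Y Z R C := by
  induction R generalizing C with
  | nil => exact prod_nonneg fun j _ => hZ j
  | cons i R ih =>
    exact add_nonneg (mul_nonneg (hY i) (ih C))
      (sum_nonneg fun j _ => mul_nonneg (hw i j) (ih _))

lemma matchingSum_congr {R : List ι} {C : Finset κ} (hw : ∀ i ∈ R, w i = w' i)
    (hY : ∀ i ∈ R, Y i = Y' i) (hZ : ∀ j ∈ C, Z j = Z' j) :
    matchingSum w Y Z R C = matchingSum w' Y' Z' R C := by
  induction R generalizing C with
  | nil => exact prod_congr rfl hZ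
  | cons i R ih =>
    have hw' : ∀ i ∈ R, w i = w' i := fun i hi => hw i (List.mem_cons_of_mem _ hi)
    have hY' : ∀ i ∈ R, Y i = Y' i := fun i hi => hY i (List.mem_cons_of_mem _ hi)
    rw [matchingSum, matchingSum, ih hw' hY' hZ, hY i List.mem_cons_self,
      hw i List.mem_cons_self]
    congr 1
    exact sum_congr rfl fun j _ => by rw [ih hw' hY' fun l hl => hZ l (mem_of_mem_erase hl)]

lemma matchingSum_perm {R R' : List ι} (h : R.Perm R') (C : Finset κ) :
    matchingSum w Y Z R C = matchingSum w Y Z R' C := by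
  induction h generalizing C with
  | nil => rfl
  | cons i _ ih => simp only [matchingSum, ih]
  | trans _ _ ih₁ ih₂ => rw [ih₁, ih₂]
  | swap i i' R =>
    have hswap : ∑ j ∈ C, ∑ l ∈ C.erase j,
          w i j * (w i' l * matchingSum w Y Z R ((C.erase j).erase l)) =
        ∑ l ∈ C, ∑ j ∈ C.erase l,
          w i' l * (w i j * matchingSum w Y Z R ((C.erase l).erase j)) := by
      rw [sum_comm' (t' := C) (s' := fun l => C.erase l)]
      · refine sum_congr rfl fun l _ => sum_congr rfl fun j _ => ?_
        rw [erase_right_comm]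
        ring
      · intro j l
        simp only [mem_erase]
        tauto
    have hmono : ∀ (a b : ι), ∑ j ∈ C, w a j * (Y b * matchingSum w Y Z R (C.erase j)) =
        ∑ j ∈ C, Y b * (w a j * matchingSum w Y Z R (C.erase j)) := fun a b =>
      sum_congr rfl fun j _ => mul_left_comm _ _ _
    simp only [matchingSum, mul_add, sum_add_distrib, mul_sum]
    rw [hswap, hmono, hmono]
    ring

lemma matchingSum_column [DecidableEq ι] (R : List ι) {C : Finset κ} {j : κ} (hj : j ∈ C) :
    matchingSum w Y Z R C = Z j * matchingSum w Y Z R (C.erase j) +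
      (R.map fun i => w i j * matchingSum w Y Z (R.erase i) (C.erase j)).sum := by
  induction R generalizing C with
  | nil => simp [matchingSum, mul_prod_erase _ _ hj]
  | cons i R ih =>
    have herase : ∀ i' ∈ R, matchingSum w Y Z ((i :: R).erase i') (C.erase j) =
        matchingSum w Y Z (i :: R.erase i') (C.erase j) := by
      intro i' hi'
      refine matchingSum_perm ?_ _
      by_cases h : i = i'
      · subst h
        rw [List.erase_cons_head]
        exact List.perm_cons_erase hi'
      · rw [List.erase_cons_tail (by simpa using h)]
    have hmap : (R.map fun i' => w i' j * matchingSum w Y Z ((i :: R).erase i') (C.erase j)) =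
        R.map fun i' => w i' j * matchingSum w Y Z (i :: R.erase i') (C.erase j) :=
      List.map_congr_left fun i' hi' => by rw [herase i' hi']
    have hsum : ∑ l ∈ C.erase j, w i l * matchingSum w Y Z R (C.erase l) =
        ∑ l ∈ C.erase j, w i l * (Z j * matchingSum w Y Z R ((C.erase j).erase l) +
          (R.map fun i' => w i' j *
            matchingSum w Y Z (R.erase i') ((C.erase j).erase l)).sum) := by
      refine sum_congr rfl fun l hl => ?_
      rw [ih (mem_erase.2 ⟨(ne_of_mem_erase hl).symm, hj⟩), erase_right_comm]
    have hlist : (R.map fun i' => w i' j * matchingSum w Y Z (i :: R.erase i') (C.erase j)).sum =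
        Y i * (R.map fun i' => w i' j * matchingSum w Y Z (R.erase i') (C.erase j)).sum +
          ∑ l ∈ C.erase j, w i l * (R.map fun i' => w i' j *
            matchingSum w Y Z (R.erase i') ((C.erase j).erase l)).sum := by
      simp only [matchingSum, mul_add, List.sum_map_add, ← List.sum_map_mul_left, mul_sum,
        mul_left_comm (Y i)]
      congr 1
      have hcomm := Multiset.sum_map_sum (m := (R : Multiset ι)) (s := C.erase j)
        (f := fun i' l => w i' j * (w i l * matchingSum w Y Z (R.erase i') ((C.erase j).erase l)))
      simp only [Multiset.map_coe, Multiset.sum_coe] at hcomm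
      rw [hcomm]
      simp only [mul_left_comm (w i _)]
    rw [List.map_cons, List.sum_cons, List.erase_cons_head, hmap, hlist, matchingSum,
      ← add_sum_erase _ _ hj, hsum, ih hj, matchingSum]
    simp only [mul_add, sum_add_distrib, mul_sum, mul_left_comm (Z j)]
    ring

lemma matchingSum_add_column_weight {C : Finset κ} {j : κ} (hj : j ∈ C) (t : ℝ) (R : List ι) :
    matchingSum w Y (Function.update Z j (Z j + t)) R C =
      matchingSum w Y Z R C + t * matchingSum w Y Z R (C.erase j) := by
  classical
  have hcongr : ∀ R : List ι, matchingSum w Y (Function.update Z j (Z j + t)) R (C.erase j) =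
      matchingSum w Y Z R (C.erase j) := fun R =>
    matchingSum_congr (fun _ _ => rfl) (fun _ _ => rfl) fun l hl => by simp [ne_of_mem_erase hl]
  rw [matchingSum_column R hj, matchingSum_column (Z := Z) R hj]
  simp only [hcongr, Function.update_self]
  ring

lemma matchingSum_cons_mul_le (hw : ∀ i j, 0 ≤ w i j) {R : List ι} {C : Finset κ}
    (h : ∀ j ∈ C, ∀ l ∈ C, j ≠ l →
      matchingSum w Y Z R C * matchingSum w Y Z R ((C.erase j).erase l) ≤
        matchingSum w Y Z R (C.erase j) * matchingSum w Y Z R (C.erase l))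
    (i : ι) {j : κ} (hj : j ∈ C) :
    matchingSum w Y Z R C * matchingSum w Y Z (i :: R) (C.erase j) ≤
      matchingSum w Y Z (i :: R) C * matchingSum w Y Z R (C.erase j) := by
  rw [matchingSum, matchingSum, ← add_sum_erase _ _ hj]
  have hle : (∑ l ∈ C.erase j, w i l * matchingSum w Y Z R ((C.erase j).erase l)) *
        matchingSum w Y Z R C ≤
      (∑ l ∈ C.erase j, w i l * matchingSum w Y Z R (C.erase l)) *
        matchingSum w Y Z R (C.erase j) := by
    rw [sum_mul, sum_mul]
    refine sum_le_sum fun l hl => ?_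
    have := mul_le_mul_of_nonneg_left
      (h j hj l (mem_of_mem_erase hl) (ne_of_mem_erase hl).symm) (hw i l)
    linarith
  have hsq := mul_nonneg (hw i j) (mul_self_nonneg (matchingSum w Y Z R (C.erase j)))
  linarith

/-- Deleting two columns is negatively correlated. -/
lemma matchingSum_mul_erase_erase_le (hw : ∀ i j, 0 ≤ w i j) (R : List ι) {C : Finset κ} {j l : κ}
    (hj : j ∈ C) (hl : l ∈ C) (hjl : j ≠ l) :
    matchingSum w Y Z R C * matchingSum w Y Z R ((C.erase j).erase l) ≤
      matchingSum w Y Z R (C.erase j) * matchingSum w Y Z R (C.erase l) := by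
  classical
  induction hn : R.length generalizing R C j l with
  | zero =>
    obtain rfl := List.length_eq_zero_iff.1 hn
    have hl' : l ∈ C.erase j := mem_erase.2 ⟨hjl.symm, hl⟩
    have hj' : j ∈ C.erase l := mem_erase.2 ⟨hjl, hj⟩
    simp only [matchingSum]
    rw [← mul_prod_erase C Z hj, ← mul_prod_erase _ Z hl', ← mul_prod_erase _ Z hj',
      erase_right_comm (a := l)]
    exact le_of_eq (by ring)
  | succ n ih =>
    have hl' : l ∈ C.erase j := mem_erase.2 ⟨hjl.symm, hl⟩
    have hj' : j ∈ C.erase l := mem_erase.2 ⟨hjl, hj⟩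
    rw [matchingSum_column R hj, matchingSum_column R hj', erase_right_comm (a := l)]
    have key : (R.map fun i => w i j * matchingSum w Y Z (R.erase i) (C.erase j)).sum *
          matchingSum w Y Z R ((C.erase j).erase l) ≤
        (R.map fun i => w i j * matchingSum w Y Z (R.erase i) ((C.erase j).erase l)).sum *
          matchingSum w Y Z R (C.erase j) := by
      rw [← List.sum_map_mul_right, ← List.sum_map_mul_right]
      refine List.sum_le_sum fun i hi => ?_
      have hlen : (R.erase i).length = n := by
        rw [List.length_erase_of_mem hi, hn, Nat.add_sub_cancel]
      have := matchingSum_cons_mul_le (Y := Y) (Z := Z) hw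
        (fun j hj l hl hjl => ih (R.erase i) hj hl hjl hlen) i hl'
      rw [← matchingSum_perm (List.perm_cons_erase hi),
        ← matchingSum_perm (List.perm_cons_erase hi)] at this
      have := mul_le_mul_of_nonneg_left this (hw i j)
      linarith
    linarith

lemma matchingSum_mul_erase_le (hw : ∀ i j, 0 ≤ w i j) (i : ι) (R : List ι) {C : Finset κ}
    {j : κ} (hj : j ∈ C) :
    matchingSum w Y Z R C * matchingSum w Y Z (i :: R) (C.erase j) ≤
      matchingSum w Y Z (i :: R) C * matchingSum w Y Z R (C.erase j) :=
  matchingSum_cons_mul_le hw (fun _ hj _ hl hjl => matchingSum_mul_erase_erase_le hw R hj hl hjl)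
    i hj

end

end

/-- The number `1 - x`, with the value at `x = 1` replaced by `1`. -/
def residual (x : ℝ) : ℝ := if x = 1 then 1 else 1 - x

lemma residual_one : residual 1 = 1 := if_pos rfl

lemma residual_of_ne {x : ℝ} (hx : x ≠ 1) : residual x = 1 - x := if_neg hx

lemma residual_pos {x : ℝ} (hx : x ≤ 1) : 0 < residual x := by
  rcases hx.eq_or_lt with rfl | hx
  · rw [residual_one]
    exact one_pos
  · rw [residual_of_ne hx.ne]
    linarith

lemma log_residual (x : ℝ) : Real.log (residual x) = Real.log (1 - x) := by
  rcases eq_or_ne x 1 with rfl | hx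
  · simp [residual_one]
  · rw [residual_of_ne hx]

lemma mul_one_sub_le_of_forall_bilinear_of_pos {A B C E K α : ℝ} (hA : 0 < A) (hB : 0 < B)
    (hC : 0 < C) (hE : 0 < E) (hα : 0 < α) (hα1 : α < 1) (hdet : B * C = A * E)
    (h : ∀ y z : ℝ, 0 < y → 0 < z →
      K * (y * z) ^ α ≤ A + α * y * B + α * z * C + α ^ 2 * (y * z) * E) :
    K * (1 - α) ≤ A + α * (1 - α) * E := by
  have hr : 0 < 1 - α := by linarith
  set X := A / (1 - α) with hX
  set W := (1 - α) * E with hW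
  have hX0 : 0 < X := div_pos hA hr
  have hW0 : 0 < W := mul_pos hr hE
  have hAX : A = X * (1 - α) := by rw [hX]; field_simp
  have hyz : X / B * (X / C) = X / W := by
    rw [div_mul_div_comm, hdet, hAX, hW]
    field_simp
  have hval : A + α * (X / B) * B + α * (X / C) * C + α ^ 2 * (X / B * (X / C)) * E =
      X / (1 - α) := by
    rw [hyz, hAX, hW]
    field_simp
    ring
  have h1 := h (X / B) (X / C) (div_pos hX0 hB) (div_pos hX0 hC)
  rw [hval, hyz, le_div_iff₀ hr, Real.div_rpow hX0.le hW0.le] at h1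
  have hXα := Real.rpow_pos_of_pos hX0 α
  have hWα := Real.rpow_pos_of_pos hW0 α
  have hgm := Real.geom_mean_le_arith_mean2_weighted (w₁ := 1 - α) (w₂ := α) (p₁ := X) (p₂ := W)
    hr.le hα.le hX0.le hW0.le (by ring)
  rw [Real.rpow_sub hX0, Real.rpow_one] at hgm
  have h2 : K * (1 - α) ≤ X / X ^ α * W ^ α := by
    rw [div_mul_eq_mul_div, le_div_iff₀ hXα]
    calc K * (1 - α) * X ^ α = K * (X ^ α / W ^ α) * (1 - α) * W ^ α := by field_simp
      _ ≤ X * W ^ α := mul_le_mul_of_nonneg_right h1 hWα.le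
  rw [hAX]
  linarith

lemma mul_one_sub_le_of_forall_bilinear {A B C E K α : ℝ} (hA : 0 ≤ A) (hC : 0 ≤ C)
    (hE : 0 ≤ E) (hα : 0 < α) (hα1 : α < 1) (hdet : B * C ≤ A * E)
    (h : ∀ y z : ℝ, 0 < y → 0 < z →
      K * (y * z) ^ α ≤ A + α * y * B + α * z * C + α ^ 2 * (y * z) * E) :
    K * (1 - α) ≤ A + α * (1 - α) * E := by
  have hε : ∀ ε : ℝ, 0 < ε → K * (1 - α) ≤ (A + ε) + α * (1 - α) * (E + ε) := by
    intro ε hε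
    have hA' : 0 < A + ε := by linarith
    have hE' : 0 < E + ε := by linarith
    set P := (A + ε) * (E + ε) with hP
    have hP0 : 0 < P := mul_pos hA' hE'
    have hBC : B * C ≤ P := hdet.trans (mul_le_mul (by linarith) (by linarith) hE hA'.le)
    set B' := max B (P / (C + 1)) with hB'
    have hB'0 : 0 < B' := lt_max_of_lt_right (by positivity)
    have hCle : C ≤ P / B' := by
      rw [le_div_iff₀ hB'0, mul_comm, hB', max_mul_of_nonneg _ _ hC]
      refine max_le hBC ?_
      rw [div_mul_eq_mul_div, div_le_iff₀ (by positivity)]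
      nlinarith
    refine mul_one_sub_le_of_forall_bilinear_of_pos (B := B') (C := P / B') hA' hB'0
      (by positivity) hE' hα hα1 (mul_div_cancel₀ _ hB'0.ne') fun y z hy hz => ?_
    refine (h y z hy hz).trans ?_
    gcongr
    · linarith
    · exact le_max_left _ _
    · linarith
  have hlim : Filter.Tendsto (fun ε : ℝ => (A + ε) + α * (1 - α) * (E + ε))
      (nhdsWithin 0 (Set.Ioi 0)) (nhds ((A + 0) + α * (1 - α) * (E + 0))) :=
    ((by fun_prop : Continuous fun ε : ℝ => (A + ε) + α * (1 - α) * (E + ε)).tendsto 0).mono_left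
      nhdsWithin_le_nhds
  have := ge_of_tendsto hlim (Filter.eventually_of_mem self_mem_nhdsWithin fun ε hε' => hε ε hε')
  simpa using this

lemma mul_residual_le_of_forall_bilinear {A B C E K α : ℝ} (hA : 0 ≤ A) (hB : 0 ≤ B)
    (hC : 0 ≤ C) (hE : 0 ≤ E) (hα : 0 ≤ α) (hα1 : α ≤ 1) (hdet : B * C ≤ A * E)
    (h : ∀ y z : ℝ, 0 < y → 0 < z →
      K * (y * z) ^ α ≤ A + α * y * B + α * z * C + α ^ 2 * (y * z) * E) :
    K * residual α ≤ A + α * residual α * E := by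
  rcases hα.eq_or_lt with rfl | hα
  · have := h 1 1 one_pos one_pos
    simpa [residual] using this
  rcases hα1.eq_or_lt with rfl | hα1
  · rw [residual_one]
    suffices K ≤ E by linarith
    by_contra! hKE
    set t := 1 + (A + B + C) / (K - E) with ht
    have hKE' : 0 < K - E := by linarith
    have ht1 : 1 ≤ t := le_add_of_nonneg_right (by positivity)
    have hmul : (K - E) * t = K - E + (A + B + C) := by rw [ht]; field_simp
    have h1 := h t t (by linarith) (by linarith)
    rw [Real.rpow_one] at h1
    nlinarith
  · rw [residual_of_ne hα1.ne]
    exact mul_one_sub_le_of_forall_bilinear hA hC hE hα hα1 hdet h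

section

variable {ι κ : Type*} [DecidableEq κ] {w : ι → κ → ℝ} {Y : ι → ℝ} {Z : κ → ℝ}

lemma matchingSum_add_row_weight [DecidableEq ι] {i : ι} {R : List ι} (hi : i ∉ R) (t : ℝ)
    (C : Finset κ) :
    matchingSum w (Function.update Y i (Y i + t)) Z (i :: R) C =
      matchingSum w Y Z (i :: R) C + t * matchingSum w Y Z R C := by
  have hcongr : ∀ C, matchingSum w (Function.update Y i (Y i + t)) Z R C =
      matchingSum w Y Z R C := fun C => by
    refine matchingSum_congr (fun _ _ => rfl) (fun l hl => ?_) fun _ _ => rfl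
    have : l ≠ i := fun h => hi (h ▸ hl)
    simp [this]
  simp only [matchingSum, hcongr, Function.update_self]
  ring

lemma matchingSum_add_dimer_weight {w' : ι → κ → ℝ} {i : ι} {R : List ι} (hi : i ∉ R)
    {C : Finset κ} {j : κ} (hj : j ∈ C) {a : ℝ} (hw : ∀ l, l ≠ i → w' l = w l)
    (hwi : ∀ l, w' i l = w i l + if l = j then a else 0) :
    matchingSum w' Y Z (i :: R) C =
      matchingSum w Y Z (i :: R) C + a * matchingSum w Y Z R (C.erase j) := by
  have hcongr : ∀ C, matchingSum w' Y Z R C = matchingSum w Y Z R C := fun C =>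
    matchingSum_congr (fun l hl => hw l fun h => hi (h ▸ hl)) (fun _ _ => rfl) fun _ _ => rfl
  simp only [matchingSum, hcongr, hwi, add_mul, sum_add_distrib, ite_mul, zero_mul,
    sum_ite_eq', if_pos hj]
  ring

lemma matchingSum_zero_dimer (R : List ι) (C : Finset κ) :
    matchingSum (fun _ _ => 0) Y Z R C = (R.map Y).prod * ∏ j ∈ C, Z j := by
  induction R with
  | nil => simp [matchingSum]
  | cons i R ih => simp [matchingSum, ih, mul_assoc]

end

section

variable {ι : Type*} [DecidableEq ι] [Fintype ι]

/-- With no monomers, the matching sum is a sum over permutations. -/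
lemma matchingSum_zero_monomer_of_eqOn_compl (w : ι → ι → ℝ) {R : List ι} (hR : R.Nodup)
    (τ : Equiv.Perm ι) :
    matchingSum w (fun _ => 0) (fun _ => 0) R (R.toFinset.image τ) =
      ∑ σ : Equiv.Perm ι with ∀ i, i ∉ R → σ i = τ i, ∏ i ∈ R.toFinset, w i (σ i) := by
  induction R generalizing τ with
  | nil =>
    have : (univ.filter fun σ : Equiv.Perm ι => ∀ i, i ∉ ([] : List ι) → σ i = τ i) = {τ} := by
      ext σ
      simp [Equiv.ext_iff]
    rw [this]
    simp [matchingSum]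
  | cons i R ih =>
    obtain ⟨hi, hR⟩ := List.nodup_cons.1 hR
    have hi' : i ∉ R.toFinset := by simpa using hi
    set F := univ.filter fun σ : Equiv.Perm ι => ∀ l, l ∉ i :: R → σ l = τ l with hF
    set C := (i :: R).toFinset.image τ with hC
    have himg : ∀ σ ∈ F, (i :: R).toFinset.image σ = C := fun σ hσ =>
      image_eq_of_eqOn_compl fun l hl => (mem_filter.1 hσ).2 l (by simpa using hl)
    have hmaps : ∀ σ ∈ F, σ i ∈ C := fun σ hσ => by
      rw [← himg σ hσ]
      exact mem_image_of_mem σ (by simp)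
    rw [matchingSum, zero_mul, zero_add, ← sum_fiberwise_of_maps_to hmaps]
    refine sum_congr rfl fun j hj => ?_
    set τ' := τ.trans (Equiv.swap (τ i) j) with hτ'
    have hτ'i : τ' i = j := by simp [hτ']
    have hτ'F : ∀ l, l ∉ i :: R → τ' l = τ l := by
      intro l hl
      have h1 : τ l ≠ τ i := fun h => hl (by rw [τ.injective h]; simp)
      have h2 : τ l ≠ j := fun h => by
        obtain ⟨l', hl', rfl⟩ := mem_image.1 hj
        rw [τ.injective h] at hl
        exact hl (by simpa using hl')
      rw [hτ', Equiv.trans_apply, Equiv.swap_apply_of_ne_of_ne h1 h2]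
    have hCj : C.erase j = R.toFinset.image τ' := by
      rw [← himg τ' (by simpa [hF] using hτ'F), ← hτ'i, ← image_erase τ'.injective,
        List.toFinset_cons, erase_insert hi']
    have hset : (F.filter fun σ => σ i = j) =
        univ.filter fun σ : Equiv.Perm ι => ∀ l, l ∉ R → σ l = τ' l := by
      ext σ
      simp only [hF, mem_filter, mem_univ, true_and]
      constructor
      · rintro ⟨hσ, hσj⟩ l hl
        by_cases h : l = i
        · rw [h, hσj, hτ'i]
        · have : l ∉ i :: R := by simp [h, hl]
          rw [hσ l this, hτ'F l this]
      · intro hσ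
        refine ⟨fun l hl => ?_, by rw [hσ i hi, hτ'i]⟩
        rw [hσ l fun h => hl (List.mem_cons_of_mem _ h), hτ'F l hl]
    rw [hset, hCj, ih hR τ', mul_sum]
    refine sum_congr rfl fun σ hσ => ?_
    rw [List.toFinset_cons, prod_insert hi', (mem_filter.1 hσ).2 i hi, hτ'i]

lemma matchingSum_zero_monomer (w : ι → ι → ℝ) :
    matchingSum w (fun _ => 0) (fun _ => 0) univ.toList univ =
      ∑ σ : Equiv.Perm ι, ∏ i, w i (σ i) := by
  have h := matchingSum_zero_monomer_of_eqOn_compl w (nodup_toList univ) (1 : Equiv.Perm ι)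
  simpa using h

/-- Dimer weights supported on the edges in `T`. -/
def dimerWeight (α : ι → ι → ℝ) (T : Finset (ι × ι)) (i j : ι) : ℝ :=
  if (i, j) ∈ T then α i j * residual (α i j) else 0

/-- Row monomer weights collecting the edges outside `T`. -/
def rowWeight (α : ι → ι → ℝ) (T : Finset (ι × ι)) (y : ι × ι → ℝ) (i : ι) : ℝ :=
  ∑ j, if (i, j) ∈ T then 0 else α i j * y (i, j)

/-- Column monomer weights collecting the edges outside `T`. -/
def colWeight (α : ι → ι → ℝ) (T : Finset (ι × ι)) (z : ι × ι → ℝ) (j : ι) : ℝ :=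
  ∑ i, if (i, j) ∈ T then 0 else α i j * z (i, j)

variable {α : ι → ι → ℝ} {T : Finset (ι × ι)} {i j : ι}

lemma rowWeight_insert (h : (i, j) ∉ T) (y : ι × ι → ℝ) (s : ℝ) :
    rowWeight α T (Function.update y (i, j) s) = Function.update (rowWeight α (insert (i, j) T) y) i
      (rowWeight α (insert (i, j) T) y i + α i j * s) := by
  ext l
  by_cases hl : l = i
  · subst hl
    rw [Function.update_self, rowWeight, rowWeight, ← add_sum_erase _ _ (mem_univ j),
      ← add_sum_erase (a := j) _ _ (mem_univ j), if_neg h, Function.update_self,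
      if_pos (mem_insert_self _ _), zero_add, add_comm]
    congr 1
    refine sum_congr rfl fun m hm => ?_
    have hm : m ≠ j := ne_of_mem_erase hm
    simp [hm]
  · rw [Function.update_of_ne hl, rowWeight, rowWeight]
    refine sum_congr rfl fun m _ => ?_
    simp [hl]

lemma colWeight_insert (h : (i, j) ∉ T) (z : ι × ι → ℝ) (t : ℝ) :
    colWeight α T (Function.update z (i, j) t) = Function.update (colWeight α (insert (i, j) T) z) j
      (colWeight α (insert (i, j) T) z j + α i j * t) := by
  ext l
  by_cases hl : l = j
  · subst hl
    rw [Function.update_self, colWeight, colWeight, ← add_sum_erase _ _ (mem_univ i),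
      ← add_sum_erase (a := i) _ _ (mem_univ i), if_neg h, Function.update_self,
      if_pos (mem_insert_self _ _), zero_add, add_comm]
    congr 1
    refine sum_congr rfl fun m hm => ?_
    have hm : m ≠ i := ne_of_mem_erase hm
    simp [hm]
  · rw [Function.update_of_ne hl, colWeight, colWeight]
    refine sum_congr rfl fun m _ => ?_
    simp [hl]

lemma prod_rpow_le_matchingSum (hα : ∀ i j, 0 ≤ α i j) (hα1 : ∀ i j, α i j ≤ 1)
    (hrow : ∀ i, ∑ j, α i j = 1) (hcol : ∀ j, ∑ i, α i j = 1) (T : Finset (ι × ι))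
    {y z : ι × ι → ℝ} (hy : ∀ e, 0 < y e) (hz : ∀ e, 0 < z e) :
    (∏ e ∈ T, residual (α e.1 e.2)) * ∏ e ∈ univ \ T, (y e * z e) ^ α e.1 e.2 ≤
      matchingSum (dimerWeight α T) (rowWeight α T y) (colWeight α T z) univ.toList univ := by
  induction T using Finset.induction_on generalizing y z with
  | empty =>
    have hw : dimerWeight α ∅ = fun _ _ => 0 := by ext; simp [dimerWeight]
    rw [hw, matchingSum_zero_dimer, prod_empty, one_mul, sdiff_empty, prod_map_toList]
    have hsplit : ∏ e : ι × ι, (y e * z e) ^ α e.1 e.2 =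
        (∏ i, ∏ j, y (i, j) ^ α i j) * ∏ j, ∏ i, z (i, j) ^ α i j := by
      simp only [fun e => Real.mul_rpow (z := α e.1 e.2) (hy e).le (hz e).le, prod_mul_distrib]
      rw [Fintype.prod_prod_type, Fintype.prod_prod_type_right]
    rw [hsplit]
    refine mul_le_mul ?_ ?_ ?_ ?_
    · refine prod_le_prod (fun i _ => prod_nonneg fun j _ => Real.rpow_nonneg (hy _).le _)
        fun i _ => ?_
      simpa [rowWeight] using Real.geom_mean_le_arith_mean_weighted univ (α i)
        (fun j => y (i, j)) (fun j _ => hα i j) (hrow i) fun j _ => (hy _).le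
    · refine prod_le_prod (fun j _ => prod_nonneg fun i _ => Real.rpow_nonneg (hz _).le _)
        fun j _ => ?_
      simpa [colWeight] using Real.geom_mean_le_arith_mean_weighted univ (fun i => α i j)
        (fun i => z (i, j)) (fun i _ => hα i j) (hcol j) fun i _ => (hz _).le
    · exact prod_nonneg fun j _ => prod_nonneg fun i _ => Real.rpow_nonneg (hz _).le _
    · exact prod_nonneg fun i _ => sum_nonneg fun j _ => by
        simpa using mul_nonneg (hα i j) (hy _).le
  | insert e T he ih =>
    obtain ⟨i, j⟩ := e
    set R := univ.toList.erase i with hR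
    have hperm : (univ.toList : List ι).Perm (i :: R) := List.perm_cons_erase (by simp)
    have hi : i ∉ R := (nodup_toList _).not_mem_erase
    set w := dimerWeight α T with hwdef
    set Y := rowWeight α (insert (i, j) T) y with hYdef
    set Z := colWeight α (insert (i, j) T) z with hZdef
    have hw : ∀ i j, 0 ≤ w i j := fun i j => by
      rw [hwdef, dimerWeight]
      split_ifs
      · exact mul_nonneg (hα i j) (residual_pos (hα1 i j)).le
      · exact le_rfl
    have hY : ∀ i, 0 ≤ Y i := fun i => sum_nonneg fun j _ => by
      split_ifs
      · exact le_rfl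
      · exact mul_nonneg (hα i j) (hy _).le
    have hZ : ∀ j, 0 ≤ Z j := fun j => sum_nonneg fun i _ => by
      split_ifs
      · exact le_rfl
      · exact mul_nonneg (hα i j) (hz _).le
    have hnew : matchingSum (dimerWeight α (insert (i, j) T)) Y Z univ.toList univ =
        matchingSum w Y Z (i :: R) univ +
          α i j * residual (α i j) * matchingSum w Y Z R (univ.erase j) := by
      rw [matchingSum_perm hperm]
      refine matchingSum_add_dimer_weight hi (mem_univ j) (fun l hl => ?_) fun l => ?_
      · ext m
        simp [hwdef, dimerWeight, hl]
      · by_cases hl : l = j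
        · subst hl
          simp [hwdef, dimerWeight, he]
        · simp [hwdef, dimerWeight, hl]
    have hnot : (i, j) ∉ univ \ insert (i, j) T := by simp
    have hsd : univ \ T = insert (i, j) (univ \ insert (i, j) T) := by
      ext e
      by_cases h : e = (i, j)
      · simp [h, he]
      · simp [h]
    have hkey := mul_residual_le_of_forall_bilinear
      (A := matchingSum w Y Z (i :: R) univ) (B := matchingSum w Y Z R univ)
      (C := matchingSum w Y Z (i :: R) (univ.erase j)) (E := matchingSum w Y Z R (univ.erase j))
      (K := (∏ e ∈ T, residual (α e.1 e.2)) *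
        ∏ e ∈ univ \ insert (i, j) T, (y e * z e) ^ α e.1 e.2)
      (matchingSum_nonneg hw hY hZ _ _) (matchingSum_nonneg hw hY hZ _ _)
      (matchingSum_nonneg hw hY hZ _ _) (matchingSum_nonneg hw hY hZ _ _)
      (hα i j) (hα1 i j) (matchingSum_mul_erase_le hw i R (mem_univ j))
      (by
        intro s t hs ht
        have h1 := ih (y := Function.update y (i, j) s) (z := Function.update z (i, j) t)
          (fun e => by
            by_cases h : e = (i, j)
            · simp [h, hs]
            · simp [h, hy e])
          (fun e => by
            by_cases h : e = (i, j)
            · simp [h, ht]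
            · simp [h, hz e])
        have hprod : ∏ e ∈ univ \ insert (i, j) T, (Function.update y (i, j) s e *
              Function.update z (i, j) t e) ^ α e.1 e.2 =
            ∏ e ∈ univ \ insert (i, j) T, (y e * z e) ^ α e.1 e.2 := by
          refine prod_congr rfl fun e he' => ?_
          have h : e ≠ (i, j) := fun h => hnot (h ▸ he')
          rw [Function.update_of_ne h, Function.update_of_ne h]
        rw [hsd, prod_insert hnot, hprod, Function.update_self, Function.update_self,
          rowWeight_insert he, colWeight_insert he, matchingSum_perm hperm,
          matchingSum_add_column_weight (mem_univ j), matchingSum_add_row_weight hi,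
          matchingSum_add_row_weight hi] at h1
        linarith)
    rw [hnew, prod_insert he]
    linarith

/-- The Bethe lower bound on the permanent of the matrix with entries
`α i j * residual (α i j)`, where `α` is doubly stochastic. -/
lemma prod_residual_le_sum_prod (hα : ∀ i j, 0 ≤ α i j) (hrow : ∀ i, ∑ j, α i j = 1)
    (hcol : ∀ j, ∑ i, α i j = 1) :
    ∏ i, ∏ j, residual (α i j) ≤
      ∑ σ : Equiv.Perm ι, ∏ i, α i (σ i) * residual (α i (σ i)) := by
  have hα1 : ∀ i j, α i j ≤ 1 := fun i j => by
    rw [← hrow i]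
    exact single_le_sum (fun l _ => hα i l) (mem_univ j)
  have h := prod_rpow_le_matchingSum hα hα1 hrow hcol univ (y := fun _ => 1) (z := fun _ => 1)
    (fun _ => one_pos) fun _ => one_pos
  have hY : rowWeight α univ (fun _ => 1) = fun _ => 0 := by ext; simp [rowWeight]
  have hZ : colWeight α univ (fun _ => 1) = fun _ => 0 := by ext; simp [colWeight]
  rw [hY, hZ, matchingSum_zero_monomer, sdiff_self, bot_eq_empty, prod_empty, mul_one,
    Fintype.prod_prod_type] at h
  simpa [dimerWeight] using h

end

section

variable {n M : ℕ} {k : Matrix (Fin n) (Fin n) ℕ}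

/-- The number of ways to complete `σ` to an `(M+1)`-tuple whose permutation matrices
sum to `k`. -/
def completions (M : ℕ) (k : Matrix (Fin n) (Fin n) ℕ) (σ : Equiv.Perm (Fin n)) : ℕ :=
  #{τ : Fin M → Equiv.Perm (Fin n) | permMat σ + ∑ m, permMat (τ m) = k}

lemma Ccoef_eq_card (M : ℕ) (k : Matrix (Fin n) (Fin n) ℕ) :
    Ccoef M n k = #{τ : Fin M → Equiv.Perm (Fin n) | ∑ m, permMat (τ m) = k} := by
  rw [Ccoef, Nat.card_eq_fintype_card, Fintype.card_subtype]

lemma sum_head_eq_sum_mul_completions (M : ℕ) (k : Matrix (Fin n) (Fin n) ℕ)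
    (g : Equiv.Perm (Fin n) → ℕ) :
    ∑ τ : Fin (M + 1) → Equiv.Perm (Fin n) with ∑ m, permMat (τ m) = k, g (τ 0) =
      ∑ σ, g σ * completions M k σ := by
  rw [sum_filter, ← (Fin.consEquiv fun _ => Equiv.Perm (Fin n)).sum_comp, Fintype.sum_prod_type]
  refine sum_congr rfl fun σ _ => ?_
  rw [completions, card_filter, mul_sum]
  refine sum_congr rfl fun τ _ => ?_
  simp [Fin.consEquiv, Fin.sum_univ_succ]

lemma sum_completions (M : ℕ) (k : Matrix (Fin n) (Fin n) ℕ) :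
    ∑ σ, completions M k σ = Ccoef (M + 1) n k := by
  have := sum_head_eq_sum_mul_completions M k fun _ => 1
  simp only [one_mul] at this
  rw [← this, Ccoef_eq_card, card_eq_sum_ones]

lemma sum_permMat_apply {ι : Type*} [Fintype ι] (τ : ι → Equiv.Perm (Fin n)) (i j : Fin n) :
    (∑ m, permMat (τ m)) i j = ∑ m, if τ m i = j then 1 else 0 := by
  rw [Matrix.sum_apply]
  rfl

lemma card_filter_apply_eq_head (M : ℕ) (k : Matrix (Fin n) (Fin n) ℕ) (i j : Fin n)
    (m : Fin (M + 1)) :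
    (∑ τ : Fin (M + 1) → Equiv.Perm (Fin n) with ∑ m, permMat (τ m) = k,
        if τ m i = j then 1 else 0) =
      ∑ τ : Fin (M + 1) → Equiv.Perm (Fin n) with ∑ m, permMat (τ m) = k,
        if τ 0 i = j then 1 else 0 := by
  rw [sum_filter, sum_filter,
    ← (Equiv.arrowCongr (Equiv.swap 0 m) (Equiv.refl (Equiv.Perm (Fin n)))).sum_comp]
  refine sum_congr rfl fun τ _ => ?_
  have hsum : ∑ l, permMat (τ (Equiv.swap 0 m l)) = ∑ l, permMat (τ l) :=
    Equiv.sum_comp (Equiv.swap 0 m) fun l => permMat (τ l)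
  simp [Equiv.arrowCongr, hsum]

/-- By exchangeability, the first permutation of a uniformly random factorization of `k` has
marginals proportional to `k`. -/
lemma succ_mul_sum_completions (M : ℕ) (k : Matrix (Fin n) (Fin n) ℕ) (i j : Fin n) :
    (M + 1) * ∑ σ, (if σ i = j then 1 else 0) * completions M k σ =
      k i j * Ccoef (M + 1) n k := by
  rw [← sum_head_eq_sum_mul_completions M k fun σ => if σ i = j then 1 else 0]
  have h : ∑ m : Fin (M + 1), ∑ τ : Fin (M + 1) → Equiv.Perm (Fin n) with
        ∑ m, permMat (τ m) = k, (if τ m i = j then 1 else 0) =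
      ∑ _m : Fin (M + 1), ∑ τ : Fin (M + 1) → Equiv.Perm (Fin n) with
        ∑ m, permMat (τ m) = k, if τ 0 i = j then 1 else 0 :=
    sum_congr rfl fun m _ => card_filter_apply_eq_head M k i j m
  rw [sum_const, card_univ, Fintype.card_fin, smul_eq_mul] at h
  rw [← h, sum_comm, Ccoef_eq_card, mul_comm, ← smul_eq_mul, ← sum_const]
  refine sum_congr rfl fun τ hτ => ?_
  rw [← sum_permMat_apply, (mem_filter.1 hτ).2]

lemma permMat_apply_le {σ : Equiv.Perm (Fin n)} (h : ∀ i, 1 ≤ k i (σ i)) (i j : Fin n) :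
    permMat σ i j ≤ k i j := by
  by_cases hij : σ i = j
  · subst hij
    simpa [permMat] using h i
  · simp [permMat, hij]

lemma completions_of_le {σ : Equiv.Perm (Fin n)} (h : ∀ i, 1 ≤ k i (σ i)) :
    completions M k σ = Ccoef M n (k - permMat σ) := by
  rw [Ccoef_eq_card, completions]
  congr 1
  ext τ
  simp only [mem_filter, mem_univ, true_and]
  have hk : permMat σ + (k - permMat σ) = k := by
    ext i j
    exact Nat.add_sub_of_le (permMat_apply_le h i j)
  constructor
  · rintro rfl
    ext i j
    exact (Nat.add_sub_cancel_left _ _).symm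
  · intro h'
    rw [h', hk]

lemma one_le_of_completions_pos {σ : Equiv.Perm (Fin n)} (h : 0 < completions M k σ) (i : Fin n) :
    1 ≤ k i (σ i) := by
  obtain ⟨τ, hτ⟩ := card_pos.1 h
  rw [← (mem_filter.1 hτ).2]
  have h1 : permMat σ i (σ i) = 1 := by simp [permMat]
  rw [Matrix.add_apply, h1]
  exact Nat.le_add_right _ _

lemma isDS_sub_permMat (hk : isDS (M + 1) n k) {σ : Equiv.Perm (Fin n)} (h : ∀ i, 1 ≤ k i (σ i)) :
    isDS M n (k - permMat σ) := by
  constructor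
  · intro i
    have hs : ∑ j, (k - permMat σ) i j + ∑ j, permMat σ i j = M + 1 := by
      rw [← sum_add_distrib, ← hk.1 i]
      exact sum_congr rfl fun j _ => Nat.sub_add_cancel (permMat_apply_le h i j)
    have h1 : ∑ j, permMat σ i j = 1 := by simp [permMat]
    omega
  · intro j
    have hs : ∑ i, (k - permMat σ) i j + ∑ i, permMat σ i j = M + 1 := by
      rw [← sum_add_distrib, ← hk.2 j]
      exact sum_congr rfl fun i _ => Nat.sub_add_cancel (permMat_apply_le h i j)
    have h1 : ∑ i, permMat σ i j = 1 := by
      simp [permMat, ← Equiv.eq_symm_apply]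
    omega

lemma isDS_le (hk : isDS M n k) (i j : Fin n) : k i j ≤ M := by
  rw [← hk.1 i]
  exact single_le_sum (fun _ _ => Nat.zero_le _) (mem_univ j)

/-- The contribution of a single matrix entry to `CB`. -/
def entryFactor (M x : ℕ) : ℝ := ((M - x).factorial : ℝ) / (M.factorial * x.factorial)

lemma entryFactor_pos (M x : ℕ) : 0 < entryFactor M x := by
  unfold entryFactor
  positivity

lemma CB_eq_mul_prod_entryFactor (M : ℕ) (k : Matrix (Fin n) (Fin n) ℕ) :
    CB M n k = (M.factorial : ℝ) ^ (2 * n) * ∏ i, ∏ j, entryFactor M (k i j) := by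
  simp only [CB, entryFactor, prod_div_distrib, prod_mul_distrib, prod_const, card_univ,
    Fintype.card_fin]
  rw [← pow_mul, ← sq, mul_div_assoc]

lemma CB_pos (M : ℕ) (k : Matrix (Fin n) (Fin n) ℕ) : 0 < CB M n k := by
  rw [CB_eq_mul_prod_entryFactor]
  have := prod_pos fun i (_ : i ∈ (univ : Finset (Fin n))) =>
    prod_pos fun j (_ : j ∈ (univ : Finset (Fin n))) => entryFactor_pos M (k i j)
  positivity

lemma entryFactor_pred (M : ℕ) {x : ℕ} (hx : 1 ≤ x) :
    entryFactor M (x - 1) = entryFactor (M + 1) x * (((M : ℝ) + 1) ^ 2 * (x / ((M : ℝ) + 1))) := by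
  obtain ⟨x, rfl⟩ := Nat.exists_eq_add_of_le' hx
  simp only [entryFactor, Nat.add_sub_cancel, Nat.add_sub_add_right, Nat.factorial_succ]
  push_cast
  have : (M : ℝ) + 1 ≠ 0 := by positivity
  have : (x : ℝ) + 1 ≠ 0 := by positivity
  field_simp

lemma entryFactor_mul_residual {M x : ℕ} (hx : x ≤ M) :
    entryFactor M x * residual (x / ((M : ℝ) + 1)) = entryFactor (M + 1) x := by
  have hM : (M : ℝ) + 1 ≠ 0 := by positivity
  have hxM : (x : ℝ) ≤ M := by exact_mod_cast hx
  have hne : (x : ℝ) / (M + 1) ≠ 1 := by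
    rw [Ne, div_eq_one_iff_eq hM]
    linarith
  rw [residual_of_ne hne]
  obtain ⟨d, rfl⟩ := Nat.exists_eq_add_of_le hx
  have h1 : x + d + 1 - x = d + 1 := by omega
  have h2 : x + d - x = d := by omega
  simp only [entryFactor, h1, h2, Nat.factorial_succ]
  push_cast at hM ⊢
  field_simp
  ring

lemma CB_sub_permMat_mul (hk : isDS (M + 1) n k) {σ : Equiv.Perm (Fin n)} (h : ∀ i, 1 ≤ k i (σ i)) :
    CB M n (k - permMat σ) * ∏ i, ∏ j, residual (k i j / ((M : ℝ) + 1)) =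
      CB (M + 1) n k * ∏ i, (k i (σ i) / ((M : ℝ) + 1)) *
        residual (k i (σ i) / ((M : ℝ) + 1)) := by
  have hrow : ∀ i, (∏ j, entryFactor M ((k - permMat σ) i j)) *
        ∏ j, residual (k i j / ((M : ℝ) + 1)) =
      (∏ j, entryFactor (M + 1) (k i j)) * (((M : ℝ) + 1) ^ 2 *
        ((k i (σ i) / ((M : ℝ) + 1)) * residual (k i (σ i) / ((M : ℝ) + 1)))) := by
    intro i
    have hoff : ∏ j ∈ univ.erase (σ i), entryFactor M ((k - permMat σ) i j) *
          residual (k i j / ((M : ℝ) + 1)) =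
        ∏ j ∈ univ.erase (σ i), entryFactor (M + 1) (k i j) := by
      refine prod_congr rfl fun j hj => ?_
      have hne := ne_of_mem_erase hj
      have hsub : (k - permMat σ) i j = k i j := by simp [permMat, hne.symm]
      have hle : k i j ≤ M := by
        have hσ := h i
        have := hk.1 i
        rw [← add_sum_erase _ _ (mem_univ (σ i))] at this
        have := single_le_sum (f := k i) (fun _ _ => Nat.zero_le _) hj
        omega
      rw [hsub, entryFactor_mul_residual hle]
    have hon : (k - permMat σ) i (σ i) = k i (σ i) - 1 := by simp [permMat]
    rw [← prod_mul_distrib, ← mul_prod_erase _ _ (mem_univ (σ i)), hoff, hon,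
      entryFactor_pred M (h i), ← mul_prod_erase _ _ (mem_univ (σ i))]
    ring
  rw [CB_eq_mul_prod_entryFactor, CB_eq_mul_prod_entryFactor, mul_assoc, ← prod_mul_distrib,
    prod_congr rfl fun i _ => hrow i, prod_mul_distrib, prod_mul_distrib, prod_const, card_univ,
    Fintype.card_fin, Nat.factorial_succ]
  push_cast
  simp only [mul_pow, pow_mul]
  ring

lemma isDS_sum_row_div (hk : isDS (M + 1) n k) (i : Fin n) :
    ∑ j, (k i j : ℝ) / ((M : ℝ) + 1) = 1 := by
  have h : ∑ j, (k i j : ℝ) = M + 1 := by exact_mod_cast hk.1 i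
  rw [← sum_div, h, div_self (by positivity)]

lemma isDS_sum_col_div (hk : isDS (M + 1) n k) (j : Fin n) :
    ∑ i, (k i j : ℝ) / ((M : ℝ) + 1) = 1 := by
  have h : ∑ i, (k i j : ℝ) = M + 1 := by exact_mod_cast hk.2 j
  rw [← sum_div, h, div_self (by positivity)]

lemma isDS_div_le_one (hk : isDS (M + 1) n k) (i j : Fin n) :
    (k i j : ℝ) / ((M : ℝ) + 1) ≤ 1 := by
  rw [div_le_one (by positivity)]
  exact_mod_cast isDS_le hk i j

lemma isDS_residual_pos (hk : isDS (M + 1) n k) (i j : Fin n) :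
    0 < residual (k i j / ((M : ℝ) + 1)) :=
  residual_pos (isDS_div_le_one hk i j)

theorem CB_le_Ccoef (hk : isDS M n k) : CB M n k ≤ Ccoef M n k := by
  induction M generalizing k with
  | zero =>
    have hz : k = 0 := by
      ext i j
      exact Nat.le_zero.1 (isDS_le hk i j)
    subst hz
    rw [Ccoef_eq_card]
    simp [CB]
  | succ M ih =>
    set P := ∏ i, ∏ j, residual (k i j / ((M : ℝ) + 1)) with hP
    have hP0 : 0 < P := prod_pos fun i _ => prod_pos fun j _ => isDS_residual_pos hk i j
    have hper := prod_residual_le_sum_prod (α := fun i j => (k i j : ℝ) / ((M : ℝ) + 1))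
      (fun i j => by positivity) (isDS_sum_row_div hk) (isDS_sum_col_div hk)
    refine le_of_mul_le_mul_right ?_ hP0
    calc CB (M + 1) n k * P
        ≤ CB (M + 1) n k * ∑ σ : Equiv.Perm (Fin n), ∏ i, (k i (σ i) / ((M : ℝ) + 1)) *
            residual (k i (σ i) / ((M : ℝ) + 1)) :=
          mul_le_mul_of_nonneg_left hper (CB_pos _ _).le
      _ ≤ ∑ σ : Equiv.Perm (Fin n), (completions M k σ : ℝ) * P := by
          rw [mul_sum]
          refine sum_le_sum fun σ _ => ?_
          by_cases h : ∀ i, 1 ≤ k i (σ i)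
          · rw [← CB_sub_permMat_mul hk h, completions_of_le h]
            exact mul_le_mul_of_nonneg_right (ih (isDS_sub_permMat hk h)) hP0.le
          · push Not at h
            obtain ⟨i, hi⟩ := h
            rw [prod_eq_zero (mem_univ i) (by simp [Nat.lt_one_iff.1 hi]), mul_zero]
            positivity
      _ = Ccoef (M + 1) n k * P := by
          rw [← sum_mul, ← sum_completions]
          push_cast
          rfl

lemma Ccoef_pos (hk : isDS M n k) : 0 < Ccoef M n k := by
  exact_mod_cast (CB_pos M k).trans_le (CB_le_Ccoef hk)

end

section

/-- Gibbs' inequality for counts `D` of total mass `C` against a sub-probability `Q`. -/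
lemma log_le_sum_of_sum_le_one {Ω : Type*} [Fintype Ω] {D Q : Ω → ℝ} {C : ℝ} (hC : 0 < C)
    (hD : ∀ ω, 0 ≤ D ω) (hsum : ∑ ω, D ω = C) (hQ0 : ∀ ω, 0 ≤ Q ω) (hQ : ∑ ω, Q ω ≤ 1)
    (hpos : ∀ ω, 0 < D ω → 0 < Q ω) :
    Real.log C ≤ ∑ ω, D ω / C * (Real.log (D ω) - Real.log (Q ω)) := by
  have hμ : ∑ ω, D ω / C = 1 := by rw [← sum_div, hsum, div_self hC.ne']
  have hterm : ∀ ω, D ω / C * Real.log C - D ω / C * (Real.log (D ω) - Real.log (Q ω)) ≤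
      Q ω - D ω / C := by
    intro ω
    rcases (hD ω).eq_or_lt with h | h
    · simpa [← h] using hQ0 ω
    · have hq := hpos ω h
      have hμω : 0 < D ω / C := div_pos h hC
      have hlog := Real.log_le_sub_one_of_pos (div_pos hq hμω)
      rw [Real.log_div hq.ne' hμω.ne', Real.log_div h.ne' hC.ne'] at hlog
      have := mul_le_mul_of_nonneg_left hlog hμω.le
      rw [mul_sub _ (Q ω / _) 1, mul_div_cancel₀ _ hμω.ne'] at this
      linarith
  have := sum_le_sum fun ω (_ : ω ∈ univ) => hterm ω
  rw [sum_sub_distrib, sum_sub_distrib, ← sum_mul, hμ] at this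
  linarith

variable {n M : ℕ} {k : Matrix (Fin n) (Fin n) ℕ}

lemma sum_completions_div_mul_apply (hk : isDS (M + 1) n k) (i : Fin n) (g : Fin n → ℝ) :
    ∑ σ, (completions M k σ : ℝ) / Ccoef (M + 1) n k * g (σ i) =
      ∑ j, (k i j : ℝ) / ((M : ℝ) + 1) * g j := by
  have hC : (0 : ℝ) < Ccoef (M + 1) n k := by exact_mod_cast Ccoef_pos hk
  have hmarg : ∀ j, ∑ σ : Equiv.Perm (Fin n), (if σ i = j then 1 else 0) *
      ((completions M k σ : ℝ) / Ccoef (M + 1) n k) = (k i j : ℝ) / ((M : ℝ) + 1) := by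
    intro j
    have h : ((M : ℝ) + 1) * ∑ σ : Equiv.Perm (Fin n), (if σ i = j then 1 else 0) *
        (completions M k σ : ℝ) = k i j * Ccoef (M + 1) n k := by
      exact_mod_cast succ_mul_sum_completions M k i j
    simp only [← mul_div_assoc]
    rw [← sum_div, div_eq_div_iff hC.ne' (by positivity), ← h]
    ring
  simp only [← hmarg, sum_mul]
  rw [sum_comm]
  refine sum_congr rfl fun σ _ => ?_
  rw [← add_sum_erase _ _ (mem_univ (σ i)), if_pos rfl, one_mul, sum_eq_zero, add_zero]
  intro j hj
  rw [if_neg (ne_of_mem_erase hj).symm, zero_mul, zero_mul]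

lemma log_CB_sub_permMat (hk : isDS (M + 1) n k) {σ : Equiv.Perm (Fin n)}
    (h : ∀ i, 1 ≤ k i (σ i)) :
    Real.log (CB M n (k - permMat σ)) = Real.log (CB (M + 1) n k) +
      ∑ i, (Real.log (k i (σ i) / ((M : ℝ) + 1)) + Real.log (1 - k i (σ i) / ((M : ℝ) + 1))) -
        ∑ i, ∑ j, Real.log (1 - k i j / ((M : ℝ) + 1)) := by
  have hres := isDS_residual_pos hk
  have hγ : ∀ i, 0 < (k i (σ i) : ℝ) / ((M : ℝ) + 1) := fun i =>
    div_pos (by exact_mod_cast h i) (by positivity)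
  have hprod : ∀ i, ∏ j, residual (k i j / ((M : ℝ) + 1)) ≠ 0 := fun i =>
    prod_ne_zero_iff.2 fun j _ => (hres i j).ne'
  have := congrArg Real.log (CB_sub_permMat_mul hk h)
  rw [Real.log_mul (CB_pos _ _).ne' (prod_ne_zero_iff.2 fun i _ => hprod i),
    Real.log_mul (CB_pos _ _).ne'
      (prod_ne_zero_iff.2 fun i _ => (mul_pos (hγ i) (hres i _)).ne'),
    Real.log_prod fun i _ => hprod i,
    Real.log_prod fun i _ => (mul_pos (hγ i) (hres i _)).ne',
    sum_congr rfl fun i _ => Real.log_prod fun j _ => (hres i j).ne',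
    sum_congr rfl fun i _ => Real.log_mul (hγ i).ne' (hres i (σ i)).ne'] at this
  simp only [log_residual] at this
  linarith

lemma log_Ccoef_succ_le (hk : isDS (M + 1) n k) {b : ℝ}
    (hb : ∀ k' : Matrix (Fin n) (Fin n) ℕ, isDS M n k' →
      Real.log (Ccoef M n k') ≤ b + Real.log (CB M n k')) :
    Real.log (Ccoef (M + 1) n k) ≤
      b + n * (Real.log 2 / 2) + Real.log (CB (M + 1) n k) := by
  set γ : Fin n → Fin n → ℝ := fun i j => k i j / ((M : ℝ) + 1) with hγdef
  have hγ : ∀ i j, 0 ≤ γ i j := fun i j => by positivity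
  set C := (Ccoef (M + 1) n k : ℝ) with hCdef
  have hC : 0 < C := Nat.cast_pos.2 (Ccoef_pos hk)
  set Q : Equiv.Perm (Fin n) → ℝ := fun σ =>
    ∏ i, γ i (σ i) * Real.exp (-meanLogRemaining univ (γ i) (σ i)) with hQ
  set S := ∑ i, ∑ j, Real.log (1 - γ i j) with hS
  set g : Fin n → Fin n → ℝ := fun i j =>
    Real.log (1 - γ i j) + meanLogRemaining univ (γ i) j with hg
  have hsum : ∑ σ, (completions M k σ : ℝ) = C := by
    rw [hCdef, ← sum_completions]
    push_cast
    rfl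
  have hγpos : ∀ {σ}, (0 : ℝ) < completions M k σ → ∀ i, 0 < γ i (σ i) := fun h i =>
    div_pos (by exact_mod_cast one_le_of_completions_pos (by exact_mod_cast h) i) (by positivity)
  have hgibbs := log_le_sum_of_sum_le_one hC (fun σ => Nat.cast_nonneg (completions M k σ)) hsum
    (fun σ => prod_nonneg fun i _ => mul_nonneg (hγ i (σ i)) (Real.exp_nonneg _))
    (sum_prod_mul_exp_meanLogRemaining_le_one hγ)
    (fun σ h => prod_pos fun i _ => mul_pos (hγpos h i) (Real.exp_pos _))
  have hterm : ∀ σ, (completions M k σ : ℝ) / C *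
      (Real.log (completions M k σ) - Real.log (Q σ)) ≤
      (completions M k σ : ℝ) / C * (b + Real.log (CB (M + 1) n k) - S) +
        ∑ i, (completions M k σ : ℝ) / C * g i (σ i) := by
    intro σ
    rw [← mul_sum, ← mul_add]
    rcases (Nat.cast_nonneg (α := ℝ) (completions M k σ)).eq_or_lt with h | h
    · rw [← h]
      simp
    · refine mul_le_mul_of_nonneg_left ?_ (by positivity)
      have hk1 := one_le_of_completions_pos (by exact_mod_cast h : 0 < completions M k σ)
      have hlogQ : Real.log (Q σ) =
          ∑ i, (Real.log (γ i (σ i)) - meanLogRemaining univ (γ i) (σ i)) := by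
        rw [hQ, Real.log_prod fun i _ => (mul_pos (hγpos h i) (Real.exp_pos _)).ne']
        refine sum_congr rfl fun i _ => ?_
        rw [Real.log_mul (hγpos h i).ne' (Real.exp_ne_zero _), Real.log_exp]
        ring
      have hle := hb _ (isDS_sub_permMat hk hk1)
      rw [log_CB_sub_permMat hk hk1] at hle
      rw [completions_of_le hk1, hlogQ, sum_sub_distrib]
      simp only [hg, sum_add_distrib] at hle ⊢
      linarith
  have htotal := hgibbs.trans (sum_le_sum fun σ _ => hterm σ)
  rw [sum_add_distrib, ← sum_mul, ← sum_div, hsum, div_self hC.ne', one_mul, sum_comm] at htotal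
  have havg : ∀ i, ∑ σ, (completions M k σ : ℝ) / C * g i (σ i) - ∑ j, Real.log (1 - γ i j) ≤
      Real.log 2 / 2 := by
    intro i
    have h1 := sum_completions_div_mul_apply hk i (g i)
    have h2 := sum_mul_meanLogRemaining univ (γ i)
    have h3 := orderSum_le univ (γ i) (fun j _ => hγ i j) (isDS_sum_row_div hk i)
    have h4 : ∑ j, mulLog (1 - γ i j) =
        ∑ j, Real.log (1 - γ i j) - ∑ j, γ i j * Real.log (1 - γ i j) := by
      rw [← sum_sub_distrib]
      exact sum_congr rfl fun j _ => by rw [mulLog]; ring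
    have h5 : ∑ j, γ i j * g i j =
        ∑ j, γ i j * Real.log (1 - γ i j) + ∑ j, γ i j * meanLogRemaining univ (γ i) j := by
      rw [← sum_add_distrib]
      exact sum_congr rfl fun j _ => by rw [hg]; ring
    linarith
  have hsumavg := sum_le_sum fun i (_ : i ∈ univ) => havg i
  rw [sum_sub_distrib, sum_const, card_univ, Fintype.card_fin, nsmul_eq_mul] at hsumavg
  linarith

lemma permMat_injective : Function.Injective (permMat : Equiv.Perm (Fin n) → _) := by
  intro σ τ h
  ext i
  have := congrFun (congrFun h i) (σ i)
  by_cases hi : τ i = σ i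
  · rw [hi]
  · simp [permMat, hi] at this

lemma Ccoef_one_le (k : Matrix (Fin n) (Fin n) ℕ) : Ccoef 1 n k ≤ 1 := by
  rw [Ccoef_eq_card, card_le_one]
  intro σ hσ τ hτ
  have hσ := (mem_filter.1 hσ).2
  have hτ := (mem_filter.1 hτ).2
  rw [Fin.sum_univ_one] at hσ hτ
  ext1 m
  rw [Subsingleton.elim m 0]
  exact permMat_injective (hσ.trans hτ.symm)

lemma CB_one (hk : isDS 1 n k) : CB 1 n k = 1 := by
  have h : ∀ i j, entryFactor 1 (k i j) = 1 := fun i j => by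
    have := isDS_le hk i j
    interval_cases k i j <;> simp [entryFactor]
  rw [CB_eq_mul_prod_entryFactor]
  simp [h]

theorem log_Ccoef_le (hk : isDS (M + 1) n k) :
    Real.log (Ccoef (M + 1) n k) ≤ M * (n * (Real.log 2 / 2)) + Real.log (CB (M + 1) n k) := by
  induction M generalizing k with
  | zero =>
    have h1 : Ccoef 1 n k = 1 := le_antisymm (Ccoef_one_le k) (Ccoef_pos hk)
    simp [h1, CB_one hk]
  | succ M ih =>
    refine (log_Ccoef_succ_le hk fun k' hk' => ih hk').trans (le_of_eq ?_)
    push_cast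
    ring

end

end BethePermanent

/-- For `n, M ≥ 1` and `k ∈ K(M,n)`:
`C_{B,M,n}(k) ≤ C_{M,n}(k) ≤ 2^{n(M−1)/2} · C_{B,M,n}(k)`; in particular `C_{M,n}(k) ≥ 1`. -/
theorem statement_3 (n M : ℕ) (hn : 1 ≤ n) (hM : 1 ≤ M)
    (k : Matrix (Fin n) (Fin n) ℕ) (hk : isDS M n k) :
    CB M n k ≤ (Ccoef M n k : ℝ) ∧
      (Ccoef M n k : ℝ) ≤ (2 : ℝ) ^ (((n : ℝ) * ((M : ℝ) - 1)) / 2) * CB M n k ∧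
      1 ≤ Ccoef M n k := by
  obtain ⟨M, rfl⟩ := Nat.exists_eq_add_of_le' hM
  refine ⟨BethePermanent.CB_le_Ccoef hk, ?_, BethePermanent.Ccoef_pos hk⟩
  have hC : (0 : ℝ) < Ccoef (M + 1) n k := by exact_mod_cast BethePermanent.Ccoef_pos hk
  have hB := BethePermanent.CB_pos (M + 1) k
  rw [← Real.log_le_log_iff hC (by positivity), Real.log_mul (by positivity) hB.ne',
    Real.log_rpow two_pos]
  refine (BethePermanent.log_Ccoef_le hk).trans (le_of_eq ?_)
  push_cast
  ring
end
end

section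
/- For all integers n, M ≥ 1 and every k ∈ K(M,n), the coefficients satisfy (M^M/M!)^n · (n!/n^n)^{M−1} · C_{scS,M,n}(k) ≤ C_{M,n}(k) ≤ (M^M/M!)^n · C_{scS,M,n}(k). -/
open scoped BigOperators

noncomputable section

/-- `C_{scS,M,n}(k) = (M!)^{2n} / (M^{nM} · ∏_{i,j} k(i,j)!)`. -/
def CscS (M n : ℕ) (k : Matrix (Fin n) (Fin n) ℕ) : ℝ :=
  (M.factorial : ℝ) ^ (2 * n) / ((M : ℝ) ^ (n * M) * ∏ i, ∏ j, ((k i j).factorial : ℝ))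

theorem Multiset.sum_map_pos {α : Type*} {s : Multiset α} {f : α → ℝ} (hs : s ≠ 0)
    (hf : ∀ a ∈ s, 0 < f a) : 0 < (s.map f).sum := by
  obtain ⟨a, ha⟩ := Multiset.exists_mem_of_ne_zero hs
  obtain ⟨m, rfl⟩ := Multiset.exists_cons_of_mem ha
  rw [Multiset.map_cons, Multiset.sum_cons]
  refine add_pos_of_pos_of_nonneg (hf a ha) (Multiset.sum_nonneg ?_)
  simp only [Multiset.mem_map]
  rintro _ ⟨x, hx, rfl⟩
  exact (hf x (Multiset.mem_cons_of_mem hx)).le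

theorem Multiset.prod_le_pow_mul_exp (s : Multiset ℝ) {ρ : ℝ} (hρ : 0 < ρ)
    (hs : ∀ x ∈ s, 0 ≤ x) : s.prod ≤ ρ ^ s.card * Real.exp (s.sum / ρ - s.card) := by
  induction s using Multiset.induction with
  | empty => simp
  | cons a s ih =>
    have ha : 0 ≤ a := hs a (by simp)
    have hs' : ∀ x ∈ s, 0 ≤ x := fun x hx => hs x (by simp [hx])
    have h1 : a ≤ ρ * Real.exp (a / ρ - 1) := by
      have := Real.add_one_le_exp (a / ρ - 1)
      rw [sub_add_cancel, div_le_iff₀ hρ] at this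
      linarith
    calc (a ::ₘ s).prod = a * s.prod := by simp
      _ ≤ (ρ * Real.exp (a / ρ - 1)) * (ρ ^ s.card * Real.exp (s.sum / ρ - s.card)) :=
          mul_le_mul h1 (ih hs') (Multiset.prod_nonneg hs') (by positivity)
      _ = ρ ^ (a ::ₘ s).card * Real.exp ((a ::ₘ s).sum / ρ - (a ::ₘ s).card) := by
          rw [Multiset.card_cons, Multiset.sum_cons]
          have : (a + s.sum) / ρ - ((s.card + 1 : ℕ) : ℝ)
              = (a / ρ - 1) + (s.sum / ρ - s.card) := by push_cast; ring
          rw [this, Real.exp_add]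
          ring

open Polynomial in
theorem Polynomial.Splits.exists_eval_mul_pow_le {f : ℝ[X]} (hf : f.Splits)
    (hroots : ∀ r ∈ f.roots, r < 0) (hlead : 0 < f.leadingCoeff) {n : ℕ} (hn : n ≠ 0)
    (hdeg : f.natDegree = n + 1) :
    ∃ t : ℝ, 0 < t ∧ f.eval t * ((n : ℝ) / (n + 1)) ^ n ≤ t * f.coeff 1 := by
  have hn' : (0 : ℝ) < n := by positivity
  have hcard : f.roots.card = n + 1 := by rw [← hdeg, hf.natDegree_eq_card_roots]
  have hev (t : ℝ) : f.eval t = f.leadingCoeff * (f.roots.map fun r => t - r).prod :=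
    hf.eval_eq_prod_roots t
  have h0 : 0 < f.eval 0 := by
    rw [hev]
    refine mul_pos hlead (Multiset.prod_pos ?_)
    simp only [Multiset.mem_map]
    rintro _ ⟨r, hr, rfl⟩
    linarith [hroots r hr]
  set S : ℝ := (f.roots.map fun r => 1 / (0 - r)).sum with hS
  have hc : f.coeff 1 = f.eval 0 * S := by
    have := hf.eval_derivative_div_eval_of_ne_zero h0.ne'
    rw [div_eq_iff h0.ne', ← hS] at this
    rw [mul_comm, ← this, ← coeff_zero_eq_eval_zero, coeff_derivative]
    simp
  have hSpos : 0 < S := by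
    refine Multiset.sum_map_pos (by rw [← Multiset.card_pos]; omega) fun r hr => ?_
    exact div_pos one_pos (by linarith [hroots r hr])
  set t : ℝ := (n + 1) / (n * S) with ht
  have htpos : 0 < t := by positivity
  refine ⟨t, htpos, ?_⟩
  have hfac : f.eval t = f.eval 0 * (f.roots.map fun r => 1 + t * (1 / (0 - r))).prod := by
    rw [hev, hev, mul_assoc, ← Multiset.prod_map_mul]
    congr 2
    refine Multiset.map_congr rfl fun r hr => ?_
    have : (0 - r) ≠ 0 := by linarith [hroots r hr]
    rw [mul_add, mul_one, mul_one_div, mul_div_cancel₀ _ this]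
    ring
  have hprod : (f.roots.map fun r => 1 + t * (1 / (0 - r))).prod
      ≤ (((n : ℝ) + 1) / n) ^ (n + 1) := by
    have := Multiset.prod_le_pow_mul_exp (f.roots.map fun r => 1 + t * (1 / (0 - r)))
      (ρ := ((n : ℝ) + 1) / n) (by positivity) (by
        simp only [Multiset.mem_map]
        rintro _ ⟨r, hr, rfl⟩
        have h3 : 0 < 1 / (0 - r) := div_pos one_pos (by linarith [hroots r hr])
        positivity)
    rw [Multiset.sum_map_add, Multiset.sum_map_mul_left, ← hS, Multiset.card_map, hcard] at this
    have h4 : ((f.roots.map fun _ => (1 : ℝ)).sum + t * S) / (((n : ℝ) + 1) / n)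
        - ((n + 1 : ℕ) : ℝ) = 0 := by
      simp only [Multiset.map_const', Multiset.sum_replicate, hcard]
      rw [ht]
      simp only [nsmul_eq_mul]
      push_cast
      field_simp
      ring
    rwa [h4, Real.exp_zero, mul_one] at this
  calc f.eval t * ((n : ℝ) / (n + 1)) ^ n
      ≤ (f.eval 0 * (((n : ℝ) + 1) / n) ^ (n + 1)) * ((n : ℝ) / (n + 1)) ^ n := by
        rw [hfac]; gcongr
    _ = f.eval 0 * ((((n : ℝ) + 1) / n) * ((n : ℝ) / (n + 1))) ^ n * (((n : ℝ) + 1) / n) := by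
        rw [mul_pow]; ring
    _ = f.eval 0 * (((n : ℝ) + 1) / n) := by
        rw [show (((n : ℝ) + 1) / n) * ((n : ℝ) / (n + 1)) = 1 by field_simp]; simp
    _ = t * f.coeff 1 := by rw [hc, ht]; field_simp

namespace MvPolynomial

variable {A : Type*} [CommRing A] [Algebra ℝ A] {n : ℕ}

/-- The univariate polynomial obtained from `p` by fixing all variables but the first. -/
def slice (p : MvPolynomial (Fin (n + 1)) ℝ) (y : Fin n → A) : Polynomial A :=
  (finSuccEquiv ℝ n p).map (aeval y : MvPolynomial (Fin n) ℝ →ₐ[ℝ] A).toRingHom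

theorem coeff_slice (p : MvPolynomial (Fin (n + 1)) ℝ) (y : Fin n → A) (i : ℕ) :
    (slice p y).coeff i = aeval y ((finSuccEquiv ℝ n p).coeff i) := by
  simp [slice, Polynomial.coeff_map]

theorem eval_slice (p : MvPolynomial (Fin (n + 1)) ℝ) (y : Fin n → A) (t : A) :
    (slice p y).eval t = aeval (Fin.cons t y : Fin (n + 1) → A) p := by
  induction p using MvPolynomial.induction_on with
  | C a => simp [slice, finSuccEquiv_apply]
  | add p q hp hq =>
    simp only [slice, map_add, Polynomial.map_add, Polynomial.eval_add] at *
    rw [hp, hq]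
  | mul_X p i hp =>
    simp only [slice, map_mul, Polynomial.map_mul, Polynomial.eval_mul, aeval_X] at *
    rw [hp]
    congr 1
    refine Fin.cases ?_ (fun j => ?_) i
    · simp [finSuccEquiv_X_zero]
    · simp [finSuccEquiv_X_succ]

theorem map_slice (p : MvPolynomial (Fin (n + 1)) ℝ) (y : Fin n → ℝ) :
    (slice p y).map Complex.ofRealHom = slice p (fun i => (y i : ℂ)) := by
  ext i
  rw [Polynomial.coeff_map, coeff_slice, coeff_slice]
  have := aeval_algebraMap_apply ℂ y ((finSuccEquiv ℝ n p).coeff i)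
  simpa [Function.comp_def] using this.symm

theorem IsHomogeneous.aeval_mul {σ : Type*} {p : MvPolynomial σ ℝ} {d : ℕ}
    (hp : p.IsHomogeneous d) (w : A) (z : σ → A) :
    MvPolynomial.aeval (fun i => w * z i) p = w ^ d * MvPolynomial.aeval z p := by
  rw [MvPolynomial.aeval_def, MvPolynomial.aeval_def, MvPolynomial.eval₂_eq, MvPolynomial.eval₂_eq, Finset.mul_sum]
  refine Finset.sum_congr rfl fun m hm => ?_
  have : ∑ i ∈ m.support, m i = d := (hp.degree_eq_sum_deg_support hm).symm
  simp_rw [mul_pow]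
  rw [Finset.prod_mul_distrib, Finset.prod_pow_eq_pow_sum, this]
  ring

/-- A real polynomial is strongly stable if it does not vanish at complex points whose coordinates
all have nonnegative real part, not all of them zero. -/
def IsStronglyStable (p : MvPolynomial (Fin n) ℝ) : Prop :=
  ∀ z : Fin n → ℂ, (∀ i, 0 ≤ (z i).re) → (∃ i, 0 < (z i).re) → aeval z p ≠ 0

theorem IsHomogeneous.coeff_finSuccEquiv {p : MvPolynomial (Fin (n + 1)) ℝ}
    (hp : p.IsHomogeneous (n + 1)) : ((finSuccEquiv ℝ n p).coeff 1).IsHomogeneous n :=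
  hp.finSuccEquiv_coeff_isHomogeneous _ _ (by omega)

theorem natDegree_slice_le {p : MvPolynomial (Fin (n + 1)) ℝ} {d : ℕ} (hp : p.IsHomogeneous d)
    (y : Fin n → A) : (slice p y).natDegree ≤ d := by
  rw [Polynomial.natDegree_le_iff_coeff_eq_zero]
  intro i hi
  have h0 : (finSuccEquiv ℝ n p).coeff i = 0 := by
    ext m
    rw [finSuccEquiv_coeff_coeff, coeff_zero]
    apply hp.coeff_eq_zero
    rw [Finsupp.degree_eq_sum, Fin.sum_univ_succ, Finsupp.cons_zero]
    omega
  rw [coeff_slice, h0, map_zero]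

theorem IsStronglyStable.natDegree_slice {p : MvPolynomial (Fin (n + 1)) ℝ} {d : ℕ}
    (hs : p.IsStronglyStable) (hp : p.IsHomogeneous d) (y : Fin n → ℂ) :
    (slice p y).natDegree = d := by
  refine le_antisymm (natDegree_slice_le hp y) (Polynomial.le_natDegree_of_ne_zero ?_)
  have h0 : ((finSuccEquiv ℝ n p).coeff d).IsHomogeneous 0 :=
    hp.finSuccEquiv_coeff_isHomogeneous _ _ (by omega)
  have hc (y : Fin n → ℂ) : (slice p y).coeff d = ((coeff 0 ((finSuccEquiv ℝ n p).coeff d) : ℝ) : ℂ) := by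
    rw [coeff_slice, (totalDegree_eq_zero_iff_eq_C).mp ((totalDegree_zero_iff_isHomogeneous _).mpr h0)]
    simp
  have hne := hs (Fin.cons 1 0) (Fin.cases (by simp) (by simp)) ⟨0, by simp⟩
  rw [← eval_slice, Polynomial.eval_eq_sum_range' (Nat.lt_succ_of_le (natDegree_slice_le hp _)),
    Finset.sum_range_succ, Finset.sum_eq_zero, zero_add, hc] at hne
  · rw [hc]
    simpa using hne
  · intro i hi
    have hi' := Finset.mem_range.mp hi
    have hh : ((finSuccEquiv ℝ n p).coeff i).IsHomogeneous (d - i) :=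
      hp.finSuccEquiv_coeff_isHomogeneous _ _ (by omega)
    have := hh.aeval_mul (0 : ℂ) (0 : Fin n → ℂ)
    simp only [Pi.zero_apply, mul_zero, zero_pow (show d - i ≠ 0 by omega), zero_mul] at this
    rw [coeff_slice, one_pow, mul_one]
    exact this

theorem IsStronglyStable.re_neg_of_isRoot {p : MvPolynomial (Fin (n + 1)) ℝ}
    (hs : p.IsStronglyStable) {y : Fin n → ℂ} (hy : ∀ i, 0 ≤ (y i).re) (hy' : ∃ i, 0 < (y i).re)
    {r : ℂ} (hr : (slice p y).eval r = 0) : r.re < 0 := by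
  by_contra! h
  obtain ⟨i, hi⟩ := hy'
  rw [eval_slice] at hr
  exact hs _ (Fin.cases (by simpa using h) (by simpa using hy)) ⟨i.succ, by simpa using hi⟩ hr

theorem IsStronglyStable.coeff_one {p : MvPolynomial (Fin (n + 1)) ℝ}
    (hs : p.IsStronglyStable) (hp : p.IsHomogeneous (n + 1)) :
    ((finSuccEquiv ℝ n p).coeff 1).IsStronglyStable := by
  intro y hy hy'
  rw [← coeff_slice]
  have hroot {r : ℂ} (hr : (slice p y).eval r = 0) := hs.re_neg_of_isRoot hy hy' hr
  have h0 : (slice p y).eval 0 ≠ 0 := fun h => by simpa using hroot h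
  have hsp := IsAlgClosed.splits (slice p y)
  have hcard : (slice p y).roots.card = n + 1 := by
    rw [← hsp.natDegree_eq_card_roots, hs.natDegree_slice hp]
  have hc := hsp.eval_derivative_div_eval_of_ne_zero h0
  intro h1
  rw [← Polynomial.coeff_zero_eq_eval_zero, Polynomial.coeff_derivative, zero_add, h1] at hc
  have hpos : 0 < (((slice p y).roots.map fun z => 1 / (0 - z)).sum).re := by
    have hz : ∀ z ∈ (slice p y).roots, 0 < (1 / (0 - z)).re := by
      intro z hz
      have := hroot (Polynomial.isRoot_of_mem_roots hz)
      have hne : z ≠ 0 := by rintro rfl; simp at this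
      rw [zero_sub, one_div, Complex.inv_re]
      exact div_pos (by simpa using this) (Complex.normSq_pos.mpr (neg_ne_zero.mpr hne))
    rw [← Complex.coe_reAddGroupHom, map_multiset_sum, Multiset.map_map]
    exact Multiset.sum_map_pos (by rw [← Multiset.card_pos]; omega) hz
  rw [← hc] at hpos
  simp at hpos

theorem IsStronglyStable.im_eq_zero_of_isRoot {p : MvPolynomial (Fin (n + 1)) ℝ} {d : ℕ}
    (hs : p.IsStronglyStable) (hp : p.IsHomogeneous d) (hn : n ≠ 0) {y : Fin n → ℝ}
    (hy : ∀ i, 0 < y i) {r : ℂ} (hr : (slice p (fun i => (y i : ℂ))).eval r = 0) : r.im = 0 := by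
  by_contra h
  set w : ℂ := ⟨1, r.re / r.im⟩ with hw
  have := hp.aeval_mul w (Fin.cons r (fun i => (y i : ℂ)))
  rw [← eval_slice, hr, mul_zero] at this
  have i₀ : Fin n := ⟨0, Nat.pos_of_ne_zero hn⟩
  refine hs _ (Fin.cases ?_ fun i => ?_) ⟨i₀.succ, ?_⟩ this
  · simpa [hw] using hy i₀
  · simp [hw, h]
  · simpa [hw] using (hy i).le

theorem IsStronglyStable.splits_slice {p : MvPolynomial (Fin (n + 1)) ℝ} {d : ℕ}
    (hs : p.IsStronglyStable) (hp : p.IsHomogeneous d) (hn : n ≠ 0) {y : Fin n → ℝ}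
    (hy : ∀ i, 0 < y i) : (slice p y).Splits := by
  refine Polynomial.Splits.of_splits_map Complex.ofRealHom (IsAlgClosed.splits _) fun a ha => ?_
  rw [map_slice] at ha
  have := hs.im_eq_zero_of_isRoot hp hn hy (Polynomial.isRoot_of_mem_roots ha)
  exact ⟨a.re, Complex.ext (by simp) (by simp [this])⟩

/-- **Gurvits' capacity inequality**. -/
theorem IsStronglyStable.mul_le_coeff {n : ℕ} {p : MvPolynomial (Fin n) ℝ}
    (hs : p.IsStronglyStable) (hp : p.IsHomogeneous n) {c : ℝ} (hc : 0 < c)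
    (hcap : ∀ x : Fin n → ℝ, (∀ i, 0 < x i) → c * ∏ i, x i ≤ aeval x p) :
    c * ((n.factorial : ℝ) / (n : ℝ) ^ n) ≤ coeff (Finsupp.equivFunOnFinite.symm 1) p := by
  induction n generalizing c with
  | zero =>
    have := hcap 0 (by simp)
    rw [totalDegree_eq_zero_iff_eq_C.mp ((totalDegree_zero_iff_isHomogeneous _).mpr hp)] at this
    simp at this
    simp only [Nat.factorial_zero, Nat.cast_one, pow_zero, div_one, mul_one]
    convert this
    exact Subsingleton.elim _ _
  | succ n ih =>
    have hcoeff : coeff (Finsupp.equivFunOnFinite.symm 1) p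
        = coeff (Finsupp.equivFunOnFinite.symm 1) ((finSuccEquiv ℝ n p).coeff 1) := by
      rw [finSuccEquiv_coeff_coeff]
      congr 1
      ext i
      refine Fin.cases ?_ (fun j => ?_) i <;> simp
    rw [hcoeff]
    have key (y : Fin n → ℝ) (hy : ∀ i, 0 < y i) :
        (c * ((n : ℝ) / (n + 1)) ^ n) * ∏ i, y i ≤ aeval y ((finSuccEquiv ℝ n p).coeff 1) := by
      have hlow (t : ℝ) (ht : 0 < t) : t * (c * ∏ i, y i) ≤ (slice p y).eval t := by
        have := hcap (Fin.cons t y) (Fin.cases (by simpa using ht) (by simpa using hy))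
        rw [Fin.prod_univ_succ, ← eval_slice] at this
        simp only [Fin.cons_zero, Fin.cons_succ] at this
        linarith
      have hpr : 0 < ∏ i, y i := Finset.prod_pos fun i _ => hy i
      rw [← coeff_slice]
      rcases eq_or_ne n 0 with rfl | hn
      · have h1 := hlow 1 one_pos
        rw [Polynomial.eval_eq_sum_range' (Nat.lt_succ_of_le (natDegree_slice_le hp _)),
          Finset.sum_range_succ, Finset.sum_range_one, coeff_slice] at h1
        have hh : ((finSuccEquiv ℝ 0 p).coeff 0).IsHomogeneous 1 :=
          hp.finSuccEquiv_coeff_isHomogeneous _ _ (by omega)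
        have h2 := hh.aeval_mul (0 : ℝ) y
        rw [Subsingleton.elim (fun i => 0 * y i) y] at h2
        rw [h2] at h1
        simpa using h1
      · have hroots : ∀ r ∈ (slice p y).roots, r < 0 := by
          intro r hr
          have h3 : (slice p (fun i => (y i : ℂ))).eval (r : ℂ) = 0 := by
            rw [← map_slice]
            have := (Polynomial.isRoot_of_mem_roots hr).map (f := Complex.ofRealHom)
            exact this
          simpa using hs.re_neg_of_isRoot (fun i => by simpa using (hy i).le)
            ⟨⟨0, Nat.pos_of_ne_zero hn⟩, by simpa using hy _⟩ h3
        have hsp := hs.splits_slice hp hn hy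
        have hdeg : (slice p y).natDegree = n + 1 := by
          rw [← hs.natDegree_slice hp (fun i => (y i : ℂ)), ← map_slice,
            Polynomial.natDegree_map_eq_of_injective Complex.ofRealHom.injective]
        have hlead : 0 < (slice p y).leadingCoeff := by
          have h4 : 0 < (slice p y).eval 1 := lt_of_lt_of_le (by positivity) (hlow 1 one_pos)
          rw [hsp.eval_eq_prod_roots] at h4
          refine pos_of_mul_pos_left h4 (Multiset.prod_nonneg ?_)
          simp only [Multiset.mem_map]
          rintro _ ⟨r, hr, rfl⟩
          linarith [hroots r hr]
        obtain ⟨t, ht, hle⟩ := hsp.exists_eval_mul_pow_le hroots hlead hn hdeg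
        have h5 := mul_le_mul_of_nonneg_right (hlow t ht)
          (by positivity : 0 ≤ ((n : ℝ) / (n + 1)) ^ n)
        refine le_of_mul_le_mul_left (le_trans (le_of_eq ?_) (h5.trans hle)) ht
        ring
    have hcn : 0 < c * ((n : ℝ) / (n + 1)) ^ n := by
      rcases eq_or_ne n 0 with rfl | hn
      · simpa
      · positivity
    refine le_trans (le_of_eq ?_) (ih (hs.coeff_one hp) hp.coeff_finSuccEquiv hcn key)
    rcases eq_or_ne n 0 with rfl | hn
    · simp
    · rw [Nat.factorial_succ, div_pow]
      push_cast
      field_simp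
      ring

end MvPolynomial

namespace Matrix

open MvPolynomial in
theorem coeff_one_prod_sum {n : ℕ} (B : Matrix (Fin n) (Fin n) ℝ) :
    coeff (Finsupp.equivFunOnFinite.symm 1) (∏ i, ∑ j, C (B i j) * X j)
      = ∑ σ : Equiv.Perm (Fin n), ∏ i, B i (σ i) := by
  have hX (f : Fin n → Fin n) : (∏ i, X (f i) : MvPolynomial (Fin n) ℝ)
      = monomial (∑ i, Finsupp.single (f i) 1) 1 := by
    simp [X, ← monomial_sum_one]
  rw [Finset.prod_univ_sum, coeff_sum, Fintype.piFinset_univ]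
  simp_rw [Finset.prod_mul_distrib, ← map_prod, coeff_C_mul, hX, coeff_monomial]
  rw [← Finset.sum_subset (Finset.subset_univ (Finset.univ.map
    ⟨fun σ : Equiv.Perm (Fin n) => (σ : Fin n → Fin n), DFunLike.coe_injective⟩)), Finset.sum_map]
  · refine Finset.sum_congr rfl fun σ _ => ?_
    simp only [Function.Embedding.coeFn_mk]
    rw [if_pos, mul_one]
    rw [Equiv.sum_comp σ (fun i => Finsupp.single i 1)]
    ext j
    simp [Finsupp.single_apply, Finsupp.finsetSum_apply]
  · intro f _ hf
    rw [if_neg, mul_zero]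
    intro h
    have hsurj : Function.Surjective f := by
      intro j
      by_contra! hj
      have := DFunLike.congr_fun h j
      simp [Finsupp.finsetSum_apply, hj] at this
    exact hf (Finset.mem_map.mpr ⟨Equiv.ofBijective f (Finite.surjective_iff_bijective.mp hsurj),
      Finset.mem_univ _, rfl⟩)

open MvPolynomial in
theorem isStronglyStable_prod_sum {n : ℕ} {B : Matrix (Fin n) (Fin n) ℝ}
    (hB : ∀ i j, 0 < B i j) :
    (∏ i, ∑ j, C (B i j) * X j : MvPolynomial (Fin n) ℝ).IsStronglyStable := by
  rintro z hz ⟨j₀, hj₀⟩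
  rw [map_prod, Finset.prod_ne_zero_iff]
  intro i _ h
  have h' := congrArg Complex.re h
  simp only [map_sum, map_mul, algHom_C, aeval_X, Complex.re_sum, Complex.coe_algebraMap,
    Complex.re_ofReal_mul, Complex.zero_re] at h'
  exact (Finset.sum_pos' (fun j _ => mul_nonneg (hB i j).le (hz j))
    ⟨j₀, Finset.mem_univ _, mul_pos (hB i j₀) hj₀⟩).ne' h'

theorem prod_le_prod_sum_of_mem_doublyStochastic {n : ℕ} {B : Matrix (Fin n) (Fin n) ℝ}
    (hB : B ∈ doublyStochastic ℝ (Fin n)) {x : Fin n → ℝ} (hx : ∀ i, 0 < x i) :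
    ∏ i, x i ≤ ∏ i, ∑ j, B i j * x j := by
  rw [mem_doublyStochastic_iff_sum] at hB
  obtain ⟨hnn, hr, hc⟩ := hB
  calc ∏ j, x j = ∏ j, ∏ i, x j ^ B i j := by
        refine Finset.prod_congr rfl fun j _ => ?_
        rw [← Real.rpow_sum_of_pos (hx j), hc, Real.rpow_one]
    _ = ∏ i, ∏ j, x j ^ B i j := Finset.prod_comm
    _ ≤ ∏ i, ∑ j, B i j * x j := by
        refine Finset.prod_le_prod (fun i _ => Finset.prod_nonneg fun j _ =>
          Real.rpow_nonneg (hx j).le _) fun i _ => ?_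
        exact Real.geom_mean_le_arith_mean_weighted _ _ _ (fun j _ => hnn i j) (hr i)
          fun j _ => (hx j).le

open MvPolynomial in
theorem factorial_div_pow_le_permanent_of_pos {n : ℕ} {B : Matrix (Fin n) (Fin n) ℝ}
    (hB : B ∈ doublyStochastic ℝ (Fin n)) (hpos : ∀ i j, 0 < B i j) :
    (n.factorial : ℝ) / (n : ℝ) ^ n ≤ ∑ σ : Equiv.Perm (Fin n), ∏ i, B i (σ i) := by
  have hhom : (∏ i, ∑ j, C (B i j) * X j : MvPolynomial (Fin n) ℝ).IsHomogeneous n := by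
    have := IsHomogeneous.prod Finset.univ
      (fun i => (∑ j, C (B i j) * X j : MvPolynomial (Fin n) ℝ)) (fun _ => 1)
      fun i _ => IsHomogeneous.sum _ _ _ fun j _ => isHomogeneous_C_mul_X _ _
    simpa using this
  have := (isStronglyStable_prod_sum hpos).mul_le_coeff hhom one_pos fun x hx => by
    simpa [map_prod] using prod_le_prod_sum_of_mem_doublyStochastic hB hx
  rwa [one_mul, coeff_one_prod_sum] at this

/-- The **van der Waerden conjecture** (Egorychev, Falikman): the permanent of a doubly stochastic
matrix of size `n` is at least `n! / n ^ n`. -/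
theorem factorial_div_pow_le_permanent {n : ℕ} {A : Matrix (Fin n) (Fin n) ℝ}
    (hA : A ∈ doublyStochastic ℝ (Fin n)) :
    (n.factorial : ℝ) / (n : ℝ) ^ n ≤ ∑ σ : Equiv.Perm (Fin n), ∏ i, A i (σ i) := by
  set g : ℝ → ℝ := fun ε => ∑ σ : Equiv.Perm (Fin n), ∏ i, ((1 - ε) * A i (σ i) + ε / n) with hg
  have hcont : Continuous g := by fun_prop
  have hlim : Filter.Tendsto g (nhdsWithin 0 (Set.Ioi 0)) (nhds (g 0)) :=
    hcont.continuousAt.tendsto.mono_left nhdsWithin_le_nhds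
  have h0 : g 0 = ∑ σ : Equiv.Perm (Fin n), ∏ i, A i (σ i) := by simp [hg]
  rw [← h0]
  refine ge_of_tendsto hlim ?_
  filter_upwards [Ioo_mem_nhdsGT (zero_lt_one' ℝ)] with ε hε
  rw [mem_doublyStochastic_iff_sum] at hA
  obtain ⟨hnn, hr, hc⟩ := hA
  have hn (i : Fin n) : (0 : ℝ) < n := by exact_mod_cast i.pos
  have hpos (i j : Fin n) : 0 < (1 - ε) * A i j + ε / n :=
    add_pos_of_nonneg_of_pos (mul_nonneg (by linarith [hε.2]) (hnn i j)) (div_pos hε.1 (hn i))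
  refine factorial_div_pow_le_permanent_of_pos (B := of fun i j => (1 - ε) * A i j + ε / n)
    (mem_doublyStochastic_iff_sum.mpr ⟨fun i j => (hpos i j).le, fun i => ?_, fun j => ?_⟩) hpos
  · have := (hn i).ne'
    simp [Finset.sum_add_distrib, ← Finset.mul_sum, hr]
    field_simp
    ring
  · have := (hn j).ne'
    simp [Finset.sum_add_distrib, ← Finset.mul_sum, hc]
    field_simp
    ring

end Matrix

theorem sum_perm_prod_le {n : ℕ} (k : Matrix (Fin n) (Fin n) ℕ) :
    ∑ σ : Equiv.Perm (Fin n), ∏ i, k i (σ i) ≤ ∏ i, ∑ j, k i j := by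
  rw [Finset.prod_univ_sum (fun _ => Finset.univ) fun i j => k i j, Fintype.piFinset_univ]
  calc ∑ σ : Equiv.Perm (Fin n), ∏ i, k i (σ i)
      = ∑ f ∈ Finset.univ.map ⟨fun σ : Equiv.Perm (Fin n) => (σ : Fin n → Fin n),
          DFunLike.coe_injective⟩, ∏ i, k i (f i) := by rw [Finset.sum_map]; rfl
    _ ≤ ∑ f : Fin n → Fin n, ∏ i, k i (f i) :=
      Finset.sum_le_sum_of_subset (Finset.subset_univ _)

theorem isDS.le_sum_perm_prod {M n : ℕ} {k : Matrix (Fin n) (Fin n) ℕ} (hM : M ≠ 0)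
    (hk : isDS M n k) :
    (M : ℝ) ^ n * ((n.factorial : ℝ) / (n : ℝ) ^ n)
      ≤ ∑ σ : Equiv.Perm (Fin n), ∏ i, (k i (σ i) : ℝ) := by
  have hM' : (M : ℝ) ≠ 0 := by exact_mod_cast hM
  have hA : (Matrix.of fun i j => (k i j : ℝ) / M) ∈ doublyStochastic ℝ (Fin n) := by
    refine mem_doublyStochastic_iff_sum.mpr ⟨fun i j => ?_, fun i => ?_, fun j => ?_⟩
    · simp only [Matrix.of_apply]; positivity
    · simp only [Matrix.of_apply]
      rw [← Finset.sum_div, ← Nat.cast_sum, hk.1, div_self hM']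
    · simp only [Matrix.of_apply]
      rw [← Finset.sum_div, ← Nat.cast_sum, hk.2, div_self hM']
  have := Matrix.factorial_div_pow_le_permanent hA
  simp only [Matrix.of_apply, Finset.prod_div_distrib, ← Finset.sum_div, Finset.prod_const,
    Finset.card_univ, Fintype.card_fin] at this
  rwa [le_div_iff₀ (by positivity), mul_comm] at this

theorem isDS.sub_permMat {M n : ℕ} {k : Matrix (Fin n) (Fin n) ℕ} (hk : isDS (M + 1) n k)
    {σ : Equiv.Perm (Fin n)} (hσ : ∀ i j, permMat σ i j ≤ k i j) : isDS M n (k - permMat σ) := by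
  have hrow (i) : ∑ j, permMat σ i j = 1 := by simp [permMat]
  have hcol (j) : ∑ i, permMat σ i j = 1 := by
    simp [permMat, ← Equiv.eq_symm_apply]
  refine ⟨fun i => ?_, fun j => ?_⟩
  · simp only [Matrix.sub_apply]
    rw [Finset.sum_tsub_distrib _ fun j _ => hσ i j, hk.1, hrow, Nat.add_sub_cancel]
  · simp only [Matrix.sub_apply]
    rw [Finset.sum_tsub_distrib _ fun i _ => hσ i j, hk.2, hcol, Nat.add_sub_cancel]

theorem permMat_le_iff {n : ℕ} {k : Matrix (Fin n) (Fin n) ℕ} {σ : Equiv.Perm (Fin n)} :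
    (∀ i j, permMat σ i j ≤ k i j) ↔ ∏ i, k i (σ i) ≠ 0 := by
  rw [Finset.prod_ne_zero_iff]
  constructor
  · intro h i _
    have := h i (σ i)
    simp [permMat] at this
    omega
  · intro h i j
    by_cases hj : σ i = j
    · subst hj
      have := h i (Finset.mem_univ _)
      simp [permMat]
      omega
    · simp [permMat, hj]

theorem Ccoef_succ (M n : ℕ) (k : Matrix (Fin n) (Fin n) ℕ) :
    Ccoef (M + 1) n k = ∑ σ : Equiv.Perm (Fin n),
      Nat.card {σs : Fin M → Equiv.Perm (Fin n) // permMat σ + ∑ m, permMat (σs m) = k} := by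
  rw [← Nat.card_sigma]
  refine Nat.card_congr
    { toFun := fun s => ⟨s.1 0, fun m => s.1 m.succ, (Fin.sum_univ_succ _).symm.trans s.2⟩
      invFun := fun s => ⟨Fin.cons s.1 s.2.1, by simpa [Fin.sum_univ_succ] using s.2.2⟩
      left_inv := fun s => Subtype.ext (Fin.cons_self_tail s.1)
      right_inv := fun _ => rfl }

theorem card_mul_prod_factorial (M n : ℕ) (k : Matrix (Fin n) (Fin n) ℕ)
    (σ : Equiv.Perm (Fin n)) :
    Nat.card {σs : Fin M → Equiv.Perm (Fin n) // permMat σ + ∑ m, permMat (σs m) = k} *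
        ∏ i, ∏ j, (k i j).factorial
      = (∏ i, k i (σ i)) *
        (Ccoef M n (k - permMat σ) * ∏ i, ∏ j, ((k - permMat σ) i j).factorial) := by
  by_cases h : ∀ i j, permMat σ i j ≤ k i j
  · have hcard : Nat.card {σs : Fin M → Equiv.Perm (Fin n) //
        permMat σ + ∑ m, permMat (σs m) = k} = Ccoef M n (k - permMat σ) := by
      refine Nat.card_congr (Equiv.subtypeEquivRight fun σs => ?_)
      constructor
      · rintro rfl
        ext i j
        simp
      · intro hs
        rw [hs]
        ext i j
        simpa using Nat.add_sub_cancel' (h i j)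
    have hfac : ∏ i, ∏ j, (k i j).factorial
        = (∏ i, k i (σ i)) * ∏ i, ∏ j, ((k - permMat σ) i j).factorial := by
      rw [← Finset.prod_mul_distrib]
      refine Finset.prod_congr rfl fun i _ => ?_
      have hi : k i (σ i) ≠ 0 :=
        Finset.prod_ne_zero_iff.mp (permMat_le_iff.mp h) i (Finset.mem_univ _)
      rw [← Finset.mul_prod_erase _ _ (Finset.mem_univ (σ i)),
        ← Finset.mul_prod_erase _ (fun j => ((k - permMat σ) i j).factorial)
          (Finset.mem_univ (σ i)), ← mul_assoc]
      congr 1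
      · simp [permMat, Nat.mul_factorial_pred hi]
      · refine Finset.prod_congr rfl fun j hj => ?_
        simp [permMat, (Finset.ne_of_mem_erase hj).symm]
    rw [hcard, hfac]
    ring
  · have hempty : IsEmpty {σs : Fin M → Equiv.Perm (Fin n) //
        permMat σ + ∑ m, permMat (σs m) = k} :=
      ⟨fun s => h fun i j => by rw [← s.2]; simp⟩
    rw [Nat.card_of_isEmpty, not_not.mp (mt permMat_le_iff.mpr h), zero_mul, zero_mul]

theorem Ccoef_succ_mul_prod_factorial (M n : ℕ) (k : Matrix (Fin n) (Fin n) ℕ) :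
    Ccoef (M + 1) n k * ∏ i, ∏ j, (k i j).factorial
      = ∑ σ : Equiv.Perm (Fin n), (∏ i, k i (σ i)) *
        (Ccoef M n (k - permMat σ) * ∏ i, ∏ j, ((k - permMat σ) i j).factorial) := by
  rw [Ccoef_succ, Finset.sum_mul]
  exact Finset.sum_congr rfl fun σ _ => card_mul_prod_factorial M n k σ

theorem isDS.eq_zero {n : ℕ} {k : Matrix (Fin n) (Fin n) ℕ} (hk : isDS 0 n k) : k = 0 := by
  ext i j
  exact Finset.sum_eq_zero_iff.mp (hk.1 i) j (Finset.mem_univ _)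

theorem Ccoef_zero_mul_prod_factorial {n : ℕ} {k : Matrix (Fin n) (Fin n) ℕ} (hk : isDS 0 n k) :
    Ccoef 0 n k * ∏ i, ∏ j, (k i j).factorial = 1 := by
  obtain rfl := hk.eq_zero
  simp [Ccoef]

theorem isDS.Ccoef_mul_prod_factorial_le {M n : ℕ} {k : Matrix (Fin n) (Fin n) ℕ}
    (hk : isDS M n k) : Ccoef M n k * ∏ i, ∏ j, (k i j).factorial ≤ M.factorial ^ n := by
  induction M generalizing k with
  | zero => simp [Ccoef_zero_mul_prod_factorial hk]
  | succ M ih =>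
    rw [Ccoef_succ_mul_prod_factorial]
    calc _ ≤ ∑ σ : Equiv.Perm (Fin n), (∏ i, k i (σ i)) * M.factorial ^ n := by
          refine Finset.sum_le_sum fun σ _ => ?_
          by_cases h : ∀ i j, permMat σ i j ≤ k i j
          · exact Nat.mul_le_mul_left _ (ih (hk.sub_permMat h))
          · rw [not_not.mp (mt permMat_le_iff.mpr h), zero_mul, zero_mul]
      _ ≤ (M + 1) ^ n * M.factorial ^ n := by
          rw [← Finset.sum_mul]
          refine Nat.mul_le_mul_right _ ((sum_perm_prod_le k).trans_eq ?_)
          simp [hk.1]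
      _ = (M + 1).factorial ^ n := by rw [← mul_pow, Nat.factorial_succ]

theorem isDS.le_Ccoef_mul_prod_factorial {M n : ℕ} {k : Matrix (Fin n) (Fin n) ℕ}
    (hk : isDS M n k) :
    (M.factorial : ℝ) ^ n * ((n.factorial : ℝ) / (n : ℝ) ^ n) ^ (M - 1)
      ≤ ((Ccoef M n k * ∏ i, ∏ j, (k i j).factorial : ℕ) : ℝ) := by
  induction M generalizing k with
  | zero => simp [Ccoef_zero_mul_prod_factorial hk]
  | succ M ih =>
    set c : ℝ := (n.factorial : ℝ) / (n : ℝ) ^ n with hc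
    have hcpos : 0 < c := by
      rcases eq_or_ne n 0 with rfl | hn
      · simp [hc]
      · positivity
    have hle : (M.factorial : ℝ) ^ n * c ^ (M - 1) *
        ∑ σ : Equiv.Perm (Fin n), ∏ i, (k i (σ i) : ℝ)
          ≤ ((Ccoef (M + 1) n k * ∏ i, ∏ j, (k i j).factorial : ℕ) : ℝ) := by
      rw [Ccoef_succ_mul_prod_factorial, Nat.cast_sum, Finset.mul_sum]
      refine Finset.sum_le_sum fun σ _ => ?_
      rw [Nat.cast_mul, Nat.cast_prod, mul_comm]
      by_cases h : ∀ i j, permMat σ i j ≤ k i j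
      · exact mul_le_mul_of_nonneg_left (ih (hk.sub_permMat h)) (by positivity)
      · rw [← Nat.cast_prod, not_not.mp (mt permMat_le_iff.mpr h)]
        simp
    have hper := hk.le_sum_perm_prod M.succ_ne_zero
    rw [← hc] at hper
    refine le_trans ?_ hle
    rw [Nat.factorial_succ, Nat.add_sub_cancel]
    rcases Nat.eq_zero_or_pos M with rfl | hM
    · have hpos : 0 < ∑ σ : Equiv.Perm (Fin n), ∏ i, k i (σ i) := by
        have : (0 : ℝ) < ∑ σ : Equiv.Perm (Fin n), ∏ i, (k i (σ i) : ℝ) :=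
          lt_of_lt_of_le (by positivity) hper
        exact_mod_cast this
      have hone : (1 : ℝ) ≤ ∑ σ : Equiv.Perm (Fin n), ∏ i, (k i (σ i) : ℝ) := by
        exact_mod_cast hpos
      simpa using hone
    · obtain ⟨m, rfl⟩ := Nat.exists_eq_succ_of_ne_zero hM.ne'
      refine le_trans (le_of_eq ?_) (mul_le_mul_of_nonneg_left hper (by positivity))
      simp only [Nat.succ_eq_add_one, Nat.add_sub_cancel]
      push_cast
      rw [mul_pow, pow_succ]
      ring

theorem mul_CscS {M n : ℕ} (hM : M ≠ 0) (k : Matrix (Fin n) (Fin n) ℕ) :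
    ((M : ℝ) ^ M / (M.factorial : ℝ)) ^ n * CscS M n k
      = (M.factorial : ℝ) ^ n / ((∏ i, ∏ j, (k i j).factorial : ℕ) : ℝ) := by
  have hM' : (M : ℝ) ≠ 0 := by exact_mod_cast hM
  have hf : (M.factorial : ℝ) ≠ 0 := by positivity
  rw [CscS, div_pow, two_mul, pow_add, mul_comm n M, pow_mul]
  push_cast
  field_simp

/-- For `n, M ≥ 1` and `k ∈ K(M,n)`:
`(M^M/M!)^n · (n!/n^n)^{M−1} · C_{scS,M,n}(k) ≤ C_{M,n}(k) ≤ (M^M/M!)^n · C_{scS,M,n}(k)`. -/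
theorem statement_4 (n M : ℕ) (hn : 1 ≤ n) (hM : 1 ≤ M)
    (k : Matrix (Fin n) (Fin n) ℕ) (hk : isDS M n k) :
    ((M : ℝ) ^ M / (M.factorial : ℝ)) ^ n * ((n.factorial : ℝ) / (n : ℝ) ^ n) ^ (M - 1) *
        CscS M n k ≤ (Ccoef M n k : ℝ) ∧
      (Ccoef M n k : ℝ) ≤ ((M : ℝ) ^ M / (M.factorial : ℝ)) ^ n * CscS M n k := by
  have hpos : (0 : ℝ) < ((∏ i, ∏ j, (k i j).factorial : ℕ) : ℝ) := by
    exact_mod_cast Finset.prod_pos fun i _ => Finset.prod_pos fun j _ => Nat.factorial_pos _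
  have hupper : ((Ccoef M n k * ∏ i, ∏ j, (k i j).factorial : ℕ) : ℝ) ≤ (M.factorial : ℝ) ^ n := by
    exact_mod_cast hk.Ccoef_mul_prod_factorial_le
  have hlower := hk.le_Ccoef_mul_prod_factorial
  rw [Nat.cast_mul] at hupper hlower
  rw [mul_right_comm, mul_CscS (by omega), div_mul_eq_mul_div, div_le_iff₀ hpos,
    le_div_iff₀ hpos]
  exact ⟨hlower, hupper⟩
end
end
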